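/- Let φ be a meromorphic Jacobi form of weight k and index m with poles supported on S, all poles being simple. Define for each ℓ ∈ ℤ the completion ĥ_ℓ(τ) := h_ℓ(τ) − ∑_{s ∈ S/ℤ²} D_s(τ)·Θ^{s,*}_{m,ℓ}(τ) and set φ̂^F(τ,z) := ∑_{ℓ=0}^{2m−1} ĥ_ℓ(τ)·θ_{m,ℓ}(τ,z). Then φ̂^F satisfies the weight-k index-m modular law for every element of SL(2,ℤ) as well as the index-m elliptic law; moreover, for each ℓ there exists a positive integer N such that ĥ_ℓ((aτ+b)/(cτ+d))·θ(τ)^{2k−1} = ĥ_ℓ(τ)·θ((aτ+b)/(cτ+d))^{2k−1} for all (a,b;c,d) in the principal congruence subgroup Γ(N) of SL(2,ℤ), where θ(τ) := ∑_{n∈ℤ} q^{n²} (i.e., each ĥ_ℓ transforms like a modular form of weight k−1/2 on a congruence subgroup). -/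

import Mathlib

noncomputable section

open Complex Filter Topology MeasureTheory
open scoped Classical

/-- `ee x = e^{2πix}`. -/
def ee (x : ℂ) : ℂ := Complex.exp (2 * (Real.pi : ℂ) * Complex.I * x)

/-- The index-`m` elliptic transformation law on `ℍ × ℂ`. -/
def EllipticLaw (m : ℕ) (φ : ℂ → ℂ → ℂ) : Prop :=
  ∀ τ : ℂ, 0 < τ.im → ∀ z : ℂ, ∀ lam mu : ℤ,
    φ τ (z + (lam : ℂ) * τ + (mu : ℂ)) =
      ee (-(m : ℂ) * ((lam : ℂ) ^ 2 * τ + 2 * (lam : ℂ) * z)) * φ τ z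

/-- The weight-`k` index-`m` modular transformation law on `ℍ × ℂ`. -/
def ModularLaw (k : ℤ) (m : ℕ) (φ : ℂ → ℂ → ℂ) : Prop :=
  ∀ τ : ℂ, 0 < τ.im → ∀ z : ℂ, ∀ a b c d : ℤ, a * d - b * c = 1 →
    φ (((a : ℂ) * τ + (b : ℂ)) / ((c : ℂ) * τ + (d : ℂ))) (z / ((c : ℂ) * τ + (d : ℂ))) =
      ((c : ℂ) * τ + (d : ℂ)) ^ k *
        ee ((m : ℂ) * (c : ℂ) * z ^ 2 / ((c : ℂ) * τ + (d : ℂ))) * φ τ z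

/-- The theta function `θ_{m,ℓ}(τ,z) = ∑_{r ≡ ℓ (mod 2m)} q^{r²/4m} y^r`. -/
def jTheta (m : ℕ) (l : ℤ) (τ z : ℂ) : ℂ :=
  ∑' n : ℤ, ee (((l : ℂ) + 2 * (m : ℂ) * (n : ℂ)) ^ 2 / (4 * (m : ℂ)) * τ +
      ((l : ℂ) + 2 * (m : ℂ) * (n : ℂ)) * z)

/-- The point `z_s = ατ + β` for `s = (α,β) ∈ ℚ²`. -/
def zpt (s : ℚ × ℚ) (τ : ℂ) : ℂ := (s.1 : ℚ) * τ + (s.2 : ℚ)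

/-- A meromorphic Jacobi form of weight `k` and index `m` with poles supported on `S`. -/
structure MeroJacobiForm (k : ℤ) (m : ℕ) (S : Set (ℚ × ℚ)) where
  toFun : ℂ → ℂ → ℂ
  lattice_inv : ∀ s ∈ S, ∀ lam mu : ℤ, (s.1 + (lam : ℚ), s.2 + (mu : ℚ)) ∈ S
  sl_inv : ∀ s ∈ S, ∀ a b c d : ℤ, a * d - b * c = 1 →
      (s.1 * (a : ℚ) + s.2 * (c : ℚ), s.1 * (b : ℚ) + s.2 * (d : ℚ)) ∈ S
  finite_classes : Set.Finite {s : ℚ × ℚ | s ∈ S ∧ 0 ≤ s.1 ∧ s.1 < 1 ∧ 0 ≤ s.2 ∧ s.2 < 1}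
  elliptic : EllipticLaw m toFun
  modular : ModularLaw k m toFun
  holo : ∀ τ : ℂ, 0 < τ.im → ∀ z : ℂ, (∀ s ∈ S, z ≠ zpt s τ) →
      DifferentiableAt ℂ (fun p : ℂ × ℂ => toFun p.1 p.2) (τ, z)
  merom : ∀ τ : ℂ, 0 < τ.im → ∀ s ∈ S, ∃ (g : ℂ → ℂ) (nn : ℕ), AnalyticAt ℂ g (zpt s τ) ∧
      ∀ᶠ z in 𝓝[≠] (zpt s τ), toFun τ z = g z / (z - zpt s τ) ^ nn

/-- All poles of `Φ` are simple (order at most 1). -/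
def HasSimplePoles {k : ℤ} {m : ℕ} {S : Set (ℚ × ℚ)} (Φ : MeroJacobiForm k m S) : Prop :=
  ∀ τ : ℂ, 0 < τ.im → ∀ s ∈ S, ∃ g : ℂ → ℂ, AnalyticAt ℂ g (zpt s τ) ∧
    ∀ᶠ z in 𝓝[≠] (zpt s τ), Φ.toFun τ z = g z / (z - zpt s τ)

/-- `h` is the family of canonical Fourier coefficients of `φ`:
`h_ℓ(τ) = q^{ℓ²/4m}·(1/2)·lim_{ε→0⁺} [∫₀¹ φ(τ, x+iε-ℓτ/2m) e(-ℓ(x+iε)) dx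
  + ∫₀¹ φ(τ, x-iε-ℓτ/2m) e(-ℓ(x-iε)) dx]`. -/
def IsCanonCoeff (m : ℕ) (φ : ℂ → ℂ → ℂ) (h : ℤ → ℂ → ℂ) : Prop :=
  ∀ l : ℤ, ∀ τ : ℂ, 0 < τ.im →
    Filter.Tendsto (fun ε : ℝ =>
        (1 / 2 : ℂ) *
          ((∫ x in (0:ℝ)..1,
              φ τ ((x : ℂ) + (ε : ℂ) * Complex.I - (l : ℂ) * τ / (2 * (m : ℂ))) *
                ee (-(l : ℂ) * ((x : ℂ) + (ε : ℂ) * Complex.I))) +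
            ∫ x in (0:ℝ)..1,
              φ τ ((x : ℂ) - (ε : ℂ) * Complex.I - (l : ℂ) * τ / (2 * (m : ℂ))) *
                ee (-(l : ℂ) * ((x : ℂ) - (ε : ℂ) * Complex.I))))
      (𝓝[>] (0 : ℝ)) (𝓝 (ee (-(l : ℂ) ^ 2 * τ / (4 * (m : ℂ))) * h l τ))

/-- `D s τ = 2πi·e(mα z_s)·Res_{z=z_s} φ(τ,z)`, characterized via the limit defining the
residue at a simple pole. -/
def IsResidueFactor (m : ℕ) (S : Set (ℚ × ℚ)) (φ : ℂ → ℂ → ℂ) (D : ℚ × ℚ → ℂ → ℂ) : Prop :=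
  ∀ s ∈ S, ∀ τ : ℂ, 0 < τ.im →
    Filter.Tendsto (fun z : ℂ =>
        2 * (Real.pi : ℂ) * Complex.I * ee ((m : ℂ) * (s.1 : ℚ) * zpt s τ) *
          ((z - zpt s τ) * φ τ z))
      (𝓝[≠] (zpt s τ)) (𝓝 (D s τ))

/-- The rational function `R_c`. -/
def Rc (c : ℝ) (y : ℂ) : ℂ :=
  if (⌈c⌉ : ℝ) = c then 1 / 2 * y ^ ⌈c⌉ * (y + 1) / (y - 1) else y ^ ⌈c⌉ / (y - 1)

/-- The index-`m` averaging operator `Av^{(m)}[F](τ,z) = ∑_{λ∈ℤ} q^{mλ²} y^{2mλ} F(q^λ y)`. -/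
def Av (m : ℕ) (F : ℂ → ℂ) (τ z : ℂ) : ℂ :=
  ∑' lam : ℤ, ee ((m : ℂ) * (lam : ℂ) ^ 2 * τ + 2 * (m : ℂ) * (lam : ℂ) * z) *
      F (ee ((lam : ℂ) * τ + z))

/-- The Appell–Lerch sum `A^s_m(τ,z) = e(-mα z_s)·Av^{(m)}[R_{-2mα}(y/y_s)]`. -/
def AppellA (m : ℕ) (s : ℚ × ℚ) (τ z : ℂ) : ℂ :=
  ee (-(m : ℂ) * (s.1 : ℚ) * zpt s τ) *
    Av m (fun w => Rc ((-(2 * (m : ℚ) * s.1) : ℚ) : ℝ) (w / ee (zpt s τ))) τ z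

/-- The finite part `φ^F(τ,z) = ∑_{ℓ=0}^{2m-1} h_ℓ(τ)·θ_{m,ℓ}(τ,z)`. -/
def finitePart (m : ℕ) (h : ℤ → ℂ → ℂ) (τ z : ℂ) : ℂ :=
  ∑ l ∈ Finset.range (2 * m), h (l : ℤ) τ * jTheta m (l : ℤ) τ z

/-- `T` is a set of representatives for `S/ℤ²`. -/
def IsRepSet (S : Set (ℚ × ℚ)) (T : Finset (ℚ × ℚ)) : Prop :=
  (↑T : Set (ℚ × ℚ)) ⊆ S ∧
    ∀ s ∈ S, ∃! t : ℚ × ℚ, t ∈ T ∧ ∃ lam mu : ℤ, s.1 = t.1 + (lam : ℚ) ∧ s.2 = t.2 + (mu : ℚ)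

/-- The complementary error function. -/
def erfc (x : ℝ) : ℝ := 2 / Real.sqrt Real.pi * ∫ t in Set.Ioi x, Real.exp (-t ^ 2)

/-- The element `λ = n + α + ℓ/2m` of `ℤ + α + ℓ/2m`. -/
def lamVal (m : ℕ) (s : ℚ × ℚ) (l : ℤ) (n : ℤ) : ℝ :=
  (n : ℝ) + (s.1 : ℝ) + (l : ℝ) / (2 * (m : ℝ))

/-- The Eichler integral `Θ^{s,*}_{m,ℓ}(τ)` of the weight-3/2 unary theta series. -/
def ThStar (m : ℕ) (s : ℚ × ℚ) (l : ℤ) (τ : ℂ) : ℂ :=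
  ee ((m : ℂ) * (s.1 : ℚ) * (s.2 : ℚ)) / 2 *
    ∑' n : ℤ, (Real.sign (lamVal m s l n) : ℂ) *
      ee (-(2 * (m : ℂ) * (s.2 : ℚ) * (lamVal m s l n : ℝ))) *
      (erfc (2 * |lamVal m s l n| * Real.sqrt (Real.pi * (m : ℝ) * τ.im)) : ℂ) *
      ee (-(m : ℂ) * (lamVal m s l n : ℝ) ^ 2 * τ)

/-- The completed canonical Fourier coefficient
`ĥ_ℓ = h_ℓ - ∑_{s ∈ S/ℤ²} D_s·Θ^{s,*}_{m,ℓ}`. -/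
def hhat (m : ℕ) (h : ℤ → ℂ → ℂ) (D : ℚ × ℚ → ℂ → ℂ) (T : Finset (ℚ × ℚ))
    (l : ℤ) (τ : ℂ) : ℂ :=
  h l τ - ∑ t ∈ T, D t τ * ThStar m t l τ

/-- The completed finite part `φ̂^F(τ,z) = ∑_{ℓ=0}^{2m-1} ĥ_ℓ(τ)·θ_{m,ℓ}(τ,z)`. -/
def completedFinitePart (m : ℕ) (h : ℤ → ℂ → ℂ) (D : ℚ × ℚ → ℂ → ℂ)
    (T : Finset (ℚ × ℚ)) (τ z : ℂ) : ℂ :=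
  ∑ l ∈ Finset.range (2 * m), hhat m h D T (l : ℤ) τ * jTheta m (l : ℤ) τ z

/-- The classical theta function `θ(τ) = ∑_{n ∈ ℤ} q^{n²}`. -/
def stdTheta (τ : ℂ) : ℂ := ∑' n : ℤ, ee ((n : ℂ) ^ 2 * τ)

/-!
The coefficient `ĥ_ℓ` is, up to the factor `√(π / (4πm Im τ))`, the Petersson pairing
`∫∫_{[0,1]²} φ(τ, pτ + u) · conj θ_{m,ℓ}(τ, pτ + u) · exp(-4πm Im(τ) p²) du dp`,
which converges because a simple pole is integrable in two real dimensions. Unfolding the theta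
series turns the pairing into the Gaussian average over all heights of the `ℓ`-th Fourier
coefficient of `φ` along horizontal lines. By the residue theorem that coefficient is `h_ℓ` plus a
step function jumping at the heights of the poles, and the Gaussian average of a step is a
complementary error function: the steps assemble to the `D_s Θ^{s,*}_{m,ℓ}`. Since `φ` and the
measure are invariant, `ĥ_ℓ` transforms dually to `θ_{m,ℓ}`, which gives the modularity of `φ̂^F`.

For the level, the Jacobi form law of `φ̂^F` makes `ĥ_ℓ` transform on `Γ(4m)` with weight `k` and
the inverse of the theta multiplier of index `m`. Translating `τ` replaces the entry `d` by a prime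
`p ≡ 1 mod 4m` (Dirichlet); the multiplier is then given by a quadratic Gauss sum modulo `p`, in
which `m` enters only as a factor of the argument and is a square modulo `p`. So it agrees with the
multiplier of the classical theta function.
-/
lemma ee_zero : ee 0 = 1 := by simp [ee]

lemma ee_ne_zero (x : ℂ) : ee x ≠ 0 := Complex.exp_ne_zero _

lemma ee_add (x y : ℂ) : ee (x + y) = ee x * ee y := by
  rw [ee, mul_add, Complex.exp_add, ee, ee]

lemma ee_neg (x : ℂ) : ee (-x) = (ee x)⁻¹ := by
  rw [ee, mul_neg, Complex.exp_neg, ee]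

lemma ee_eq_one_iff {x : ℂ} : ee x = 1 ↔ ∃ n : ℤ, x = n := by
  rw [ee, Complex.exp_eq_one_iff]
  refine exists_congr fun n => ?_
  rw [mul_comm (n : ℂ), mul_right_inj' Complex.two_pi_I_ne_zero]

lemma ee_intCast (n : ℤ) : ee n = 1 := ee_eq_one_iff.2 ⟨n, rfl⟩

lemma ee_eq_ee_of_sub_eq_intCast {x y : ℂ} (n : ℤ) (h : x - y = n) : ee x = ee y := by
  rw [sub_eq_iff_eq_add.1 h, ee_add, ee_intCast, one_mul]

lemma norm_ee (x : ℂ) : ‖ee x‖ = Real.exp (-(2 * Real.pi * x.im)) := by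
  simp [ee, Complex.norm_exp]

lemma conj_ee (x : ℂ) : (starRingEnd ℂ) (ee x) = ee (-(starRingEnd ℂ) x) := by
  simp [ee, ← Complex.exp_conj, Complex.conj_ofNat]

@[fun_prop]
lemma differentiable_ee : Differentiable ℂ ee := by
  unfold ee; fun_prop

@[fun_prop]
lemma continuous_ee : Continuous ee := differentiable_ee.continuous

lemma hasDerivAt_ee (x : ℂ) : HasDerivAt ee (2 * (Real.pi : ℂ) * I * ee x) x := by
  have h := ((hasDerivAt_id x).const_mul (2 * (Real.pi : ℂ) * I)).cexp
  rw [mul_one] at h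
  rw [mul_comm]
  exact h

lemma tsum_int_eq_sum_tsum {ι : Type*} [Fintype ι] (d : ℕ) [NeZero d] {g : ι → ℤ}
    (hg : Function.Bijective fun i => (g i : ZMod d)) {f : ℤ → ℂ} (hf : Summable f) :
    ∑' r : ℤ, f r = ∑ i, ∑' n : ℤ, f (g i + d * n) := by
  have hbij : Function.Bijective fun p : ι × ℤ => g p.1 + d * p.2 := by
    constructor
    · rintro ⟨i, n⟩ ⟨j, k⟩ h
      obtain rfl : i = j := hg.1 <| by simpa using congr_arg (Int.cast : ℤ → ZMod d) h
      simpa [NeZero.ne d] using h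
    · intro r
      obtain ⟨i, hi⟩ := hg.2 r
      obtain ⟨n, hn⟩ := (ZMod.intCast_eq_intCast_iff_dvd_sub _ _ _).1 hi
      exact ⟨(i, n), by simp [← hn]⟩
  let e := Equiv.ofBijective _ hbij
  have hs : Summable fun p => f (e p) := e.summable_iff.2 hf
  rw [← e.tsum_eq f, hs.tsum_prod' fun i => hs.comp_injective (Prod.mk_right_injective i),
    tsum_fintype]
  rfl

section ThetaFunctions

variable {m : ℕ}

lemma jTheta_add_two_mul (l n : ℤ) (τ z : ℂ) :
    jTheta m (l + 2 * m * n) τ z = jTheta m l τ z := by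
  rw [jTheta, jTheta]
  conv_rhs => rw [← (Equiv.addRight n).tsum_eq]
  refine tsum_congr fun j => ?_
  push_cast [Equiv.coe_addRight]
  ring_nf

lemma stdTheta_eq_jTheta (τ : ℂ) : stdTheta τ = jTheta 1 0 τ 0 := by
  rw [stdTheta, jTheta]
  refine tsum_congr fun n => congr_arg ee ?_
  push_cast
  ring

variable [NeZero m]

lemma jTheta_term_eq (l n : ℤ) (τ z : ℂ) :
    ee ((l + 2 * m * n) ^ 2 / (4 * m) * τ + (l + 2 * m * n) * z) =
      ee ((l : ℂ) ^ 2 / (4 * m) * τ + l * z) *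
        jacobiTheta₂_term n (l * τ + 2 * m * z) (2 * m * τ) := by
  have hm := NeZero.ne (m : ℂ)
  rw [jacobiTheta₂_term, ee, ee, ← Complex.exp_add]
  congr 1
  field_simp
  ring

lemma jTheta_eq_jacobiTheta₂ (l : ℤ) (τ z : ℂ) :
    jTheta m l τ z = ee ((l : ℂ) ^ 2 / (4 * m) * τ + l * z) *
      jacobiTheta₂ (l * τ + 2 * m * z) (2 * m * τ) := by
  rw [jTheta, jacobiTheta₂, ← tsum_mul_left]
  exact tsum_congr fun n => jTheta_term_eq l n τ z

lemma im_two_mul_natCast_mul_pos {τ : ℂ} (hτ : 0 < τ.im) : 0 < (2 * (m : ℂ) * τ).im := by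
  have hm : 0 < (2 * m : ℝ) := by exact_mod_cast (by simp [NeZero.pos m] : 0 < 2 * m)
  simpa using mul_pos hm hτ

lemma summable_jTheta (l : ℤ) {τ : ℂ} (hτ : 0 < τ.im) (z : ℂ) :
    Summable fun n : ℤ => ee (((l : ℂ) + 2 * m * n) ^ 2 / (4 * m) * τ + (l + 2 * m * n) * z) := by
  simp_rw [jTheta_term_eq]
  exact ((summable_jacobiTheta₂_term_iff _ _).2 (im_two_mul_natCast_mul_pos hτ)).mul_left _

lemma differentiable_jTheta (l : ℤ) {τ : ℂ} (hτ : 0 < τ.im) : Differentiable ℂ (jTheta m l τ) := by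
  rw [funext (jTheta_eq_jacobiTheta₂ (m := m) l τ)]
  have hθ : Differentiable ℂ fun z => jacobiTheta₂ (l * τ + 2 * m * z) (2 * m * τ) := fun z =>
    (differentiableAt_jacobiTheta₂_fst _ (im_two_mul_natCast_mul_pos hτ)).comp z (by fun_prop)
  fun_prop

lemma jTheta_ellipticLaw (l : ℤ) : EllipticLaw m (jTheta m l) := by
  intro τ _ z lam mu
  have hm := NeZero.ne (m : ℂ)
  rw [jTheta, jTheta, ← tsum_mul_left]
  conv_rhs => rw [← (Equiv.addRight lam).tsum_eq]
  refine tsum_congr fun n => ?_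
  rw [← ee_add]
  refine ee_eq_ee_of_sub_eq_intCast ((l + 2 * m * n) * mu) ?_
  push_cast [Equiv.coe_addRight]
  field_simp
  ring

lemma jTheta_add_intCast (l b : ℤ) (τ z : ℂ) :
    jTheta m l (τ + b) z = ee ((l : ℂ) ^ 2 * b / (4 * m)) * jTheta m l τ z := by
  have hm := NeZero.ne (m : ℂ)
  rw [jTheta, jTheta, ← tsum_mul_left]
  refine tsum_congr fun n => ?_
  rw [← ee_add]
  refine ee_eq_ee_of_sub_eq_intCast (l * n * b + m * n ^ 2 * b) ?_
  push_cast
  field_simp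
  ring

lemma dual_term_eq (l r : ℤ) (τ z : ℂ) :
    ee ((r : ℂ) ^ 2 / (4 * m) * τ + r * z - r * l / (2 * m)) =
      jacobiTheta₂_term r (z - l / (2 * m)) (τ / (2 * m)) := by
  have hm := NeZero.ne (m : ℂ)
  rw [jacobiTheta₂_term, ee]
  congr 1
  field_simp
  ring

lemma summable_dual_term (l : ℤ) {τ : ℂ} (hτ : 0 < τ.im) (z : ℂ) :
    Summable fun r : ℤ => ee ((r : ℂ) ^ 2 / (4 * m) * τ + r * z - r * l / (2 * m)) := by
  simp_rw [dual_term_eq]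
  refine (summable_jacobiTheta₂_term_iff _ _).2 ?_
  have h2m : (0 : ℝ) < (2 * m : ℕ) := by exact_mod_cast Nat.mul_pos two_pos (NeZero.pos m)
  have := div_pos hτ h2m
  rwa [← Complex.div_natCast_im, Nat.cast_mul, Nat.cast_ofNat] at this

lemma jTheta_neg_inv (l : ℤ) {τ : ℂ} (hτ : τ ≠ 0) (z : ℂ) :
    jTheta m l (-1 / τ) (z / τ) = (-I * (τ / (2 * m))) ^ (1 / 2 : ℂ) * ee (m * z ^ 2 / τ) *
      ∑' r : ℤ, ee ((r : ℂ) ^ 2 / (4 * m) * τ + r * z - r * l / (2 * m)) := by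
  have hm := NeZero.ne (m : ℂ)
  have : (-I * (τ / (2 * m))) ^ (1 / 2 : ℂ) ≠ 0 := by
    rw [Complex.cpow_ne_zero_iff]
    left
    simp [hτ, hm]
  have hpt : (z - l / (2 * m)) / (τ / (2 * m)) = l * (-1 / τ) + 2 * m * (z / τ) := by
    field_simp
    ring
  have hmod : -1 / (τ / (2 * m)) = 2 * m * (-1 / τ) := by field_simp
  have hexp : ee ((l : ℂ) ^ 2 / (4 * m) * (-1 / τ) + l * (z / τ)) =
      ee (m * z ^ 2 / τ) * cexp (-Real.pi * I * (z - l / (2 * m)) ^ 2 / (τ / (2 * m))) := by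
    rw [ee, ee, ← Complex.exp_add]
    congr 1
    field_simp
    ring
  simp_rw [dual_term_eq]
  rw [← jacobiTheta₂, jacobiTheta₂_functional_equation, jTheta_eq_jacobiTheta₂, hpt, hmod, hexp]
  field_simp

lemma jTheta_neg_inv_eq_sum (l : ℤ) {τ : ℂ} (hτ : 0 < τ.im) (z : ℂ) :
    jTheta m l (-1 / τ) (z / τ) = (-I * (τ / (2 * m))) ^ (1 / 2 : ℂ) * ee (m * z ^ 2 / τ) *
      ∑ j ∈ Finset.range (2 * m), ee (-(j * l / (2 * m))) * jTheta m j τ z := by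
  have hm := NeZero.ne (m : ℂ)
  have hbij : Function.Bijective fun j : Fin (2 * m) => ((j : ℤ) : ZMod (2 * m)) :=
    Function.bijective_iff_has_inverse.2 ⟨fun x => ⟨x.val, x.val_lt⟩,
      fun j => Fin.ext (by simpa using ZMod.val_cast_of_lt j.isLt), fun x => by simp⟩
  rw [jTheta_neg_inv l (by rintro rfl; simp at hτ), Finset.sum_range,
    tsum_int_eq_sum_tsum (2 * m) hbij (summable_dual_term l hτ z)]
  congr 1
  refine Finset.sum_congr rfl fun j _ => ?_
  rw [jTheta, ← tsum_mul_left]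
  refine tsum_congr fun n => ?_
  rw [← ee_add]
  refine ee_eq_ee_of_sub_eq_intCast (-(n * l)) ?_
  push_cast
  field_simp
  ring

end ThetaFunctions
section GaussSums

variable {d : ℕ} [NeZero d]

lemma stdAddChar_intCast_eq_ee (j : ℤ) : ZMod.stdAddChar (j : ZMod d) = ee (j / d) := by
  rw [ZMod.stdAddChar_coe, ee, mul_div_assoc]

/-- The quadratic Gauss sum `∑_t e(xt²/d)` over `t` modulo `d`. -/
def quadGaussSum (x : ZMod d) : ℂ := ∑ t : ZMod d, ZMod.stdAddChar (x * t ^ 2)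

lemma quadGaussSum_sq_mul {u : ZMod d} (hu : IsUnit u) (x : ZMod d) :
    quadGaussSum (u ^ 2 * x) = quadGaussSum x := by
  rw [quadGaussSum, quadGaussSum]
  conv_rhs => rw [← Equiv.sum_comp (Units.mulLeft hu.unit)]
  refine Finset.sum_congr rfl fun t _ => ?_
  rw [Units.mulLeft_apply, hu.unit_spec]
  ring_nf

/-- Completing the square, with `b` playing the role of `-1/(4a)`. -/
lemma sum_stdAddChar_quadratic {a b : ZMod d} (h : 4 * a * b = -1) (r : ZMod d) :
    ∑ s : ZMod d, ZMod.stdAddChar (a * s ^ 2 + r * s) =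
      ZMod.stdAddChar (b * r ^ 2) * quadGaussSum a := by
  rw [quadGaussSum, Finset.mul_sum, ← Equiv.sum_comp (Equiv.addRight (2 * b * r))]
  refine Finset.sum_congr rfl fun t _ => ?_
  rw [← AddChar.map_add_eq_mul, Equiv.coe_addRight]
  congr 1
  linear_combination (r * t + b * r ^ 2) * h

lemma quadGaussSum_eq_gaussSum {p : ℕ} [Fact p.Prime] (hp : p ≠ 2) {x : ZMod p} (hx : x ≠ 0) :
    quadGaussSum x = gaussSum ((quadraticChar (ZMod p)).ringHomComp (Int.castRingHom ℂ))
      (ZMod.stdAddChar.mulShift x) := by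
  have hchar : ringChar (ZMod p) ≠ 2 := by rwa [ZMod.ringChar_zmod_n]
  have hfiber : quadGaussSum x =
      ∑ y : ZMod p, ((quadraticChar (ZMod p) y + 1 : ℤ) : ℂ) * ZMod.stdAddChar (x * y) := by
    rw [quadGaussSum, ← Finset.sum_fiberwise' Finset.univ (· ^ 2) fun y => ZMod.stdAddChar (x * y)]
    refine Finset.sum_congr rfl fun y _ => ?_
    rw [Finset.sum_const, ← quadraticChar_card_sqrts hchar, nsmul_eq_mul, Set.toFinset_ofPred]
    push_cast
    rfl
  have horth : ∑ y : ZMod p, (ZMod.stdAddChar (x * y) : ℂ) = 0 :=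
    AddChar.sum_eq_zero_of_ne_one (ψ := ZMod.stdAddChar.mulShift x)
      (ZMod.isPrimitive_stdAddChar p hx)
  simp only [hfiber, Int.cast_add, Int.cast_one, add_mul, one_mul, Finset.sum_add_distrib, horth,
    add_zero]
  rfl

lemma quadGaussSum_sq {p : ℕ} [Fact p.Prime] (hp : p ≠ 2) {x : ZMod p} (hx : x ≠ 0) :
    quadGaussSum x ^ 2 = (quadraticChar (ZMod p) (-1) : ℂ) * p := by
  have hchar : ringChar (ZMod p) ≠ 2 := by rwa [ZMod.ringChar_zmod_n]
  have hprim : (ZMod.stdAddChar.mulShift x : AddChar (ZMod p) ℂ).IsPrimitive := fun y hy => by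
    rw [AddChar.mulShift_mulShift]
    exact ZMod.isPrimitive_stdAddChar p (mul_ne_zero hx hy)
  rw [quadGaussSum_eq_gaussSum hp hx, gaussSum_sq ?_ ?_ hprim, ZMod.card]
  · rfl
  · exact (MulChar.ringHomComp_ne_one_iff (RingHom.injective_int _)).2 (quadraticChar_ne_one hchar)
  · exact (quadraticChar_isQuadratic _).comp _

end GaussSums

section ThetaMultiplier

lemma quadGaussSum_mul_jTheta_add_div {m d : ℕ} [NeZero m] [NeZero d] {b c : ℤ}
    (hbc : (4 * m * c * b : ZMod d) = -1) (l : ℤ) {w : ℂ} (hw : 0 < w.im) (z : ℂ) :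
    quadGaussSum (m * c : ZMod d) * jTheta m l (w + 4 * m * b / d) z =
      ∑ s : ZMod d, ee (m * c * s.val ^ 2 / d) * jTheta m l w (z + s.val / d) := by
  have hm := NeZero.ne (m : ℂ)
  have hd := NeZero.ne (d : ℂ)
  have hsq : 4 * (m * c : ZMod d) * b = -1 := by rw [← hbc]; ring
  simp only [jTheta, ← tsum_mul_left]
  rw [← Summable.tsum_finsetSum fun s _ => (summable_jTheta l hw _).mul_left _]
  refine tsum_congr fun n => ?_
  set r : ℤ := l + 2 * m * n with hr
  have hrC : (l + 2 * m * n : ℂ) = r := by simp [hr]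
  have hb : ee ((r : ℂ) ^ 2 / (4 * m) * (w + 4 * m * b / d) + r * z) =
      ZMod.stdAddChar (b * r ^ 2 : ZMod d) * ee ((r : ℂ) ^ 2 / (4 * m) * w + r * z) := by
    have := stdAddChar_intCast_eq_ee (d := d) (b * r ^ 2)
    push_cast at this
    rw [this, ← ee_add]
    congr 1
    field_simp
    ring
  rw [hrC, hb, ← mul_assoc, mul_comm (quadGaussSum _), ← sum_stdAddChar_quadratic hsq,
    Finset.sum_mul]
  refine Finset.sum_congr rfl fun s _ => ?_
  have := stdAddChar_intCast_eq_ee (d := d) (m * c * s.val ^ 2 + r * s.val)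
  push_cast [ZMod.natCast_zmod_val] at this
  rw [this, ← ee_add, ← ee_add]
  congr 1
  field_simp
  ring

lemma im_natCast_mul_pos (d : ℕ) [NeZero d] {τ : ℂ} (hτ : 0 < τ.im) : 0 < ((d : ℂ) * τ).im := by
  have hd : (0 : ℝ) < d := by exact_mod_cast NeZero.pos d
  simpa using mul_pos hd hτ

lemma im_neg_one_div_pos {τ : ℂ} (hτ : 0 < τ.im) : 0 < (-1 / τ).im := by
  rw [neg_div, one_div, ← inv_neg]
  exact UpperHalfPlane.im_inv_neg_coe_pos ⟨τ, hτ⟩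

lemma denom_ne_zero {τ : ℂ} (hτ : 0 < τ.im) {a b c d : ℤ} (hdet : a * d - b * c = 1) :
    (c * τ + d : ℂ) ≠ 0 := by
  have hcd : ![(c : ℝ), d] ≠ 0 := fun h => by
    have hc : c = 0 := by simpa using congr_fun h 0
    have hd : d = 0 := by simpa using congr_fun h 1
    simp [hc, hd] at hdet
  simpa using UpperHalfPlane.linear_ne_zero ⟨τ, hτ⟩ hcd

lemma ee_dual_term_dissection {m d : ℕ} [NeZero m] [NeZero d] {c c' d' : ℤ}
    (hc : (c : ℂ) = 4 * m * c') (hd : (d : ℂ) = 2 * m * d' + 1) (l r s : ℤ) {σ : ℂ}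
    (hden : d * σ - c ≠ 0) (y : ℂ) :
    ee (m * c * s ^ 2 / d) *
        (ee (m * (d * y + s / d * (d * (d * σ - c))) ^ 2 / (d * (d * σ - c))) *
          ee ((r : ℂ) ^ 2 / (4 * m) * (d * (d * σ - c)) +
            r * (d * y + s / d * (d * (d * σ - c))) - r * l / (2 * m))) =
      ee (m * d * y ^ 2 / (d * σ - c)) *
        ee ((2 * m * s + d * r : ℂ) ^ 2 / (4 * m) * σ + (2 * m * s + d * r) * y -
          (2 * m * s + d * r) * l / (2 * m)) := by
  have hm := NeZero.ne (m : ℂ)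
  have hd0 := NeZero.ne (d : ℂ)
  obtain ⟨x, hx⟩ : ∃ x : ℂ, x = d * σ - c := ⟨_, rfl⟩
  obtain rfl : σ = (x + c) / d := by
    rw [hx]
    field_simp
    ring
  rw [← hx] at hden ⊢
  simp only [← ee_add]
  refine ee_eq_ee_of_sub_eq_intCast
    (-c' * d * r ^ 2 - 4 * m * c' * r * s + l * (s + d' * r)) ?_
  rw [hc]
  push_cast
  field_simp
  linear_combination (4 * d * r * l * x) * hd

/-- Put `R = rd + 2ms`. As `d` is prime to `2m`, every integer `R` arises from exactly one pair
`(s mod d, r)`. -/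
lemma sum_dual_series_eq {m d : ℕ} [NeZero m] [NeZero d] {c : ℤ} (hc : 4 * (m : ℤ) ∣ c)
    (hd : 2 * (m : ℤ) ∣ d - 1) (l : ℤ) {σ : ℂ} (hσ : 0 < σ.im) (y : ℂ) :
    ∑ s : ZMod d, ee (m * c * s.val ^ 2 / d) *
        (ee (m * (d * y + s.val / d * (d * (d * σ - c))) ^ 2 / (d * (d * σ - c))) *
          ∑' r : ℤ, ee ((r : ℂ) ^ 2 / (4 * m) * (d * (d * σ - c)) +
            r * (d * y + s.val / d * (d * (d * σ - c))) - r * l / (2 * m))) =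
      ee (m * d * y ^ 2 / (d * σ - c)) *
        ∑' r : ℤ, ee ((r : ℂ) ^ 2 / (4 * m) * σ + r * y - r * l / (2 * m)) := by
  obtain ⟨c', hc'⟩ := hc
  obtain ⟨d', hd'⟩ := hd
  have hdC : (d : ℂ) = 2 * m * d' + 1 := by
    have : (d : ℤ) = 2 * m * d' + 1 := by linarith
    exact_mod_cast congr_arg (Int.cast : ℤ → ℂ) this
  have hunit : IsUnit (2 * m : ZMod d) := by
    refine IsUnit.of_mul_eq_one (-d' : ZMod d) ?_
    have := congr_arg (Int.cast : ℤ → ZMod d) hd'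
    push_cast [ZMod.natCast_self] at this
    linear_combination this
  have hbij : Function.Bijective fun s : ZMod d => ((2 * m * s.val : ℤ) : ZMod d) := by
    simpa using (Units.mulLeft hunit.unit).bijective
  have hden : d * σ - c ≠ 0 := fun h => by
    have := im_natCast_mul_pos d hσ
    rw [sub_eq_zero.1 h] at this
    exact this.ne' (Complex.intCast_im _)
  rw [tsum_int_eq_sum_tsum d hbij (summable_dual_term l hσ y), Finset.mul_sum]
  refine Finset.sum_congr rfl fun s _ => ?_
  rw [← tsum_mul_left, ← tsum_mul_left, ← tsum_mul_left]
  refine tsum_congr fun r => ?_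
  have := ee_dual_term_dissection (by exact_mod_cast hc') hdC l r s.val hden y
  push_cast at this ⊢
  exact this

/-- The substitution `-1/(d(dσ-c)) + b/d = (bσ-a)/(dσ-c)` turns translation by `b/d` followed by
inversion into the action of `(a b; c d)` on `-1/σ`. -/
lemma quadGaussSum_mul_jTheta {m d : ℕ} [NeZero m] [NeZero d] {a b c : ℤ}
    (hdet : a * d - b * c = 1) (hb : 4 * (m : ℤ) ∣ b) (hc : 4 * (m : ℤ) ∣ c)
    (hd : 2 * (m : ℤ) ∣ d - 1) (l : ℤ) {σ : ℂ} (hσ : 0 < σ.im) (y : ℂ) :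
    quadGaussSum (m * c : ZMod d) * jTheta m l ((b * σ - a) / (d * σ - c)) (y / (d * σ - c)) =
      (-I * (d * (d * σ - c) / (2 * m))) ^ (1 / 2 : ℂ) * ee (m * d * y ^ 2 / (d * σ - c)) *
        ∑' r : ℤ, ee ((r : ℂ) ^ 2 / (4 * m) * σ + r * y - r * l / (2 * m)) := by
  have hd0 := NeZero.ne (d : ℂ)
  obtain ⟨b', rfl⟩ := hb
  have hx : 0 < (d * (d * σ - c) : ℂ).im := by
    refine im_natCast_mul_pos d ?_
    rw [Complex.sub_im, Complex.intCast_im, sub_zero]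
    exact im_natCast_mul_pos d hσ
  have hx0 : (d * (d * σ - c) : ℂ) ≠ 0 := fun h => by simp [h] at hx
  have hden := right_ne_zero_of_mul hx0
  have hbc : (4 * m * c * b' : ZMod d) = -1 := by
    have := congr_arg (Int.cast : ℤ → ZMod d) hdet
    push_cast [ZMod.natCast_self] at this
    linear_combination -this
  have hpt : ((4 * m * b' : ℤ) * σ - a) / (d * σ - c) =
      -1 / (d * (d * σ - c)) + 4 * m * b' / d := by
    have hdetC : (a * d - 4 * m * b' * c : ℂ) = 1 := by exact_mod_cast hdet
    rw [div_add_div _ _ hx0 hd0, div_eq_div_iff hden (mul_ne_zero hx0 hd0)]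
    push_cast
    linear_combination (-d * (d * σ - c)) * hdetC
  have hinv (s : ZMod d) : y / (d * σ - c) + s.val / d =
      (d * y + s.val / d * (d * (d * σ - c))) / (d * (d * σ - c)) := by
    field_simp
  rw [hpt, quadGaussSum_mul_jTheta_add_div hbc l (im_neg_one_div_pos hx), mul_assoc,
    ← sum_dual_series_eq hc hd l hσ, Finset.mul_sum]
  refine Finset.sum_congr rfl fun s _ => ?_
  rw [hinv, jTheta_neg_inv l hx0]
  ring

end ThetaMultiplier
section ThetaFactor

lemma ofReal_mul_cpow {r : ℝ} (hr : 0 < r) {x : ℂ} (hx : x ≠ 0) (s : ℂ) :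
    (r * x) ^ s = (r : ℂ) ^ s * x ^ s := by
  have hr0 : (r : ℂ) ≠ 0 := ofReal_ne_zero.2 hr.ne'
  rw [cpow_def_of_ne_zero (mul_ne_zero hr0 hx), cpow_def_of_ne_zero hr0, cpow_def_of_ne_zero hx,
    log_ofReal_mul hr hx, ofReal_log hr.le, add_mul, Complex.exp_add]

lemma cpow_one_half_sq (x : ℂ) : (x ^ (1 / 2 : ℂ)) ^ 2 = x := by
  rw [one_div]
  exact_mod_cast cpow_nat_inv_pow x two_ne_zero

lemma isSquare_natCast_of_modEq_one {p m : ℕ} [Fact p.Prime] (h : p ≡ 1 [MOD 4 * m]) :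
    IsSquare (m : ZMod p) := by
  rcases Nat.eq_zero_or_pos m with rfl | hm
  · simp
  have hmod : p % (4 * m) = 1 := by rw [h, Nat.mod_eq_of_lt (by lia)]
  have hodd : Odd p := by
    rw [Nat.odd_iff, ← Nat.mod_mod_of_dvd p (show 2 ∣ 4 * m by lia), hmod]
  have hjac : legendreSym p (m : ℤ) = 1 := by
    rw [jacobiSym.legendreSym.to_jacobiSym, jacobiSym.mod_right _ hodd, Int.natAbs_natCast, hmod,
      jacobiSym.one_right]
  have hm0 : ((m : ℤ) : ZMod p) ≠ 0 := fun h0 => by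
    simp [(legendreSym.eq_zero_iff p m).2 h0] at hjac
  exact_mod_cast (legendreSym.eq_one_iff p hm0).1 hjac

lemma natCast_ne_zero_of_modEq_one {p m : ℕ} [Fact p.Prime] (h : p ≡ 1 [MOD 4 * m]) :
    (m : ZMod p) ≠ 0 := by
  rw [Ne, ZMod.natCast_eq_zero_iff]
  intro hdvd
  have := (h.of_dvd (hdvd.trans (Dvd.intro_left 4 rfl)))
  exact (Fact.out : p.Prime).one_lt.ne' (by simpa [Nat.ModEq, Nat.mod_self] using this)

lemma quadGaussSum_sq_of_modEq_one {p : ℕ} [Fact p.Prime] (h : p ≡ 1 [MOD 4]) {x : ZMod p}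
    (hx : x ≠ 0) : quadGaussSum x ^ 2 = p := by
  have hsq : IsSquare (-1 : ZMod p) := ZMod.exists_sq_eq_neg_one_iff.2 (by rw [h]; decide)
  rw [quadGaussSum_sq (by rintro rfl; cases h) hx,
    (quadraticChar_one_iff_isSquare (neg_ne_zero.2 one_ne_zero)).2 hsq, Int.cast_one, one_mul]

/-- `χ` is the automorphy factor, at `τ`, of the matrix `(a, b; c, d)` on every theta function
`θ_{m,ℓ}` whose index `m` divides `M`. That `χ` does not depend on `m` lets `θ_{m,ℓ}` be compared
with the classical theta function, which is `θ_{1,0}`. -/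
def IsThetaFactor (M : ℕ) (a b c d : ℤ) (τ χ : ℂ) : Prop :=
  χ ^ 2 = c * τ + d ∧ ∀ m : ℕ, m ∣ M → ∀ (l : ℤ) (z : ℂ),
    jTheta m l ((a * τ + b) / (c * τ + d)) (z / (c * τ + d)) =
      χ * ee (m * c * z ^ 2 / (c * τ + d)) * jTheta m l τ z

lemma quadGaussSum_natCast_mul {p m : ℕ} [Fact p.Prime] (h : p ≡ 1 [MOD 4 * m]) (x : ZMod p) :
    quadGaussSum ((m : ZMod p) * x) = quadGaussSum x := by
  obtain ⟨n, hn⟩ := isSquare_natCast_of_modEq_one h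
  have hn0 : n ≠ 0 := by
    rintro rfl
    exact natCast_ne_zero_of_modEq_one h (by rw [hn, mul_zero])
  rw [hn, ← sq, quadGaussSum_sq_mul (isUnit_iff_ne_zero.2 hn0)]

lemma quadGaussSum_mul_jTheta_smul {d : ℕ} [NeZero d] {a b c : ℤ} {m : ℕ} [NeZero m] {τ : ℂ}
    (hdet : a * d - b * c = 1) (hb : 4 * (m : ℤ) ∣ b) (hc : 4 * (m : ℤ) ∣ c)
    (hd : 2 * (m : ℤ) ∣ d - 1) (hτ : 0 < τ.im) (l : ℤ) (z : ℂ) :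
    quadGaussSum (m * c : ZMod d) * (-I * (-1 / τ)) ^ (1 / 2 : ℂ) *
        jTheta m l ((a * τ + b) / (c * τ + d)) (z / (c * τ + d)) =
      (-I * (-d * (c * τ + d) / τ)) ^ (1 / 2 : ℂ) * ee (m * c * z ^ 2 / (c * τ + d)) *
        jTheta m l τ z := by
  have hτ0 : τ ≠ 0 := by rintro rfl; simp at hτ
  have hm := NeZero.ne (m : ℂ)
  have hden : (c * τ + d : ℂ) ≠ 0 := by exact_mod_cast denom_ne_zero hτ hdet
  have hscale {x : ℂ} (hx : x ≠ 0) : (-I * (x / (2 * m))) ^ (1 / 2 : ℂ) =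
      (((2 * (m : ℝ))⁻¹ : ℝ) : ℂ) ^ (1 / 2 : ℂ) * (-I * x) ^ (1 / 2 : ℂ) := by
    have hm' : 0 < (2 * (m : ℝ))⁻¹ := by have := NeZero.pos m; positivity
    rw [← ofReal_mul_cpow hm' (mul_ne_zero (neg_ne_zero.2 I_ne_zero) hx)]
    congr 1
    push_cast
    ring
  have hsub : d * (-1 / τ) - c = -(c * τ + d) / τ := by
    field_simp
    ring
  have hquot : -(d : ℂ) * (c * τ + d) / τ ≠ 0 :=
    div_ne_zero (mul_ne_zero (neg_ne_zero.2 (NeZero.ne _)) hden) hτ0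
  have hσ0 : -1 / τ ≠ 0 := div_ne_zero (neg_ne_zero.2 one_ne_zero) hτ0
  have hdual := jTheta_neg_inv (m := m) l hσ0 (-z / τ)
  have key := quadGaussSum_mul_jTheta hdet hb hc hd l (im_neg_one_div_pos hτ) (-z / τ)
  have hexp : ee (m * d * (-z / τ) ^ 2 / (-(c * τ + d) / τ)) =
      ee (m * c * z ^ 2 / (c * τ + d)) * ee (m * (-z / τ) ^ 2 / (-1 / τ)) := by
    rw [← ee_add]
    congr 1
    generalize hD : (c * τ + d : ℂ) = D at hden ⊢
    rw [eq_sub_of_add_eq' hD]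
    field_simp
    ring
  rw [hsub, hexp,
    show (b * (-1 / τ) - a) / (-(c * τ + d) / τ) = (a * τ + b) / (c * τ + d) by field_simp; ring,
    show -z / τ / (-(c * τ + d) / τ) = z / (c * τ + d) by field_simp,
    show (d : ℂ) * (-(c * τ + d) / τ) = -d * (c * τ + d) / τ by ring, hscale hquot] at key
  rw [show -1 / (-1 / τ) = τ by field_simp, show -z / τ / (-1 / τ) = z by field_simp,
    hscale hσ0] at hdual
  rw [hdual, mul_right_comm, key]
  ring

variable {M : ℕ} [NeZero M] {a b c : ℤ} {τ : ℂ}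

lemma exists_isThetaFactor_of_prime {p : ℕ} (hp : p.Prime) (hdet : a * p - b * c = 1)
    (hpM : p ≡ 1 [MOD 4 * M]) (hb : 4 * (M : ℤ) ∣ b) (hc : 4 * (M : ℤ) ∣ c) (hτ : 0 < τ.im) :
    ∃ χ, IsThetaFactor M a b c p τ χ := by
  have : Fact p.Prime := ⟨hp⟩
  have hcp : (c : ZMod p) ≠ 0 := fun h => by
    simpa [h] using congr_arg (Int.cast : ℤ → ZMod p) hdet
  have hG := quadGaussSum_sq_of_modEq_one (hpM.of_dvd (Dvd.intro _ rfl)) hcp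
  have hp0 : (p : ℂ) ≠ 0 := by exact_mod_cast hp.ne_zero
  have hG0 : quadGaussSum (c : ZMod p) ≠ 0 := fun h => hp0 (by simpa [h] using hG.symm)
  have hτ0 : τ ≠ 0 := by rintro rfl; simp at hτ
  have hroot : (-I * (-1 / τ)) ^ (1 / 2 : ℂ) ≠ 0 := by
    rw [Complex.cpow_ne_zero_iff]
    left
    simp [hτ0]
  refine ⟨(-I * (-p * (c * τ + p) / τ)) ^ (1 / 2 : ℂ) /
    (quadGaussSum (c : ZMod p) * (-I * (-1 / τ)) ^ (1 / 2 : ℂ)), ?_, fun m hmM l z => ?_⟩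
  · rw [div_pow, mul_pow, cpow_one_half_sq, cpow_one_half_sq, hG]
    push_cast
    field_simp
  · have : NeZero m := ⟨fun h => NeZero.ne M (zero_dvd_iff.1 (h ▸ hmM))⟩
    have h4 : 4 * (m : ℤ) ∣ 4 * M := mul_dvd_mul_left 4 (Int.natCast_dvd_natCast.2 hmM)
    have hpm : p ≡ 1 [MOD 4 * m] := hpM.of_dvd (mul_dvd_mul_left 4 hmM)
    have hd : 2 * (m : ℤ) ∣ p - 1 := by
      have := (hpm.of_dvd (show 2 * m ∣ 4 * m from ⟨2, by ring⟩)).symm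
      exact_mod_cast (Nat.modEq_iff_dvd.1 this)
    have key := quadGaussSum_mul_jTheta_smul hdet (h4.trans hb) (h4.trans hc) hd hτ l z
    rw [quadGaussSum_natCast_mul hpm] at key
    push_cast
    rw [div_mul_eq_mul_div, div_mul_eq_mul_div, eq_div_iff (mul_ne_zero hG0 hroot), mul_comm, key]

lemma IsThetaFactor.of_sub_intCast {d : ℤ} {χ : ℂ} (n : ℤ)
    (h : IsThetaFactor M a (b + a * (4 * M * n)) c (d + c * (4 * M * n)) (τ - 4 * M * n) χ) :
    IsThetaFactor M a b c d τ χ := by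
  have hden : (c * (τ - 4 * M * n) + (d + c * (4 * M * n) : ℤ) : ℂ) = c * τ + d := by
    push_cast
    ring
  have hnum : (a * (τ - 4 * M * n) + (b + a * (4 * M * n) : ℤ) : ℂ) = a * τ + b := by
    push_cast
    ring
  rw [IsThetaFactor, hden, hnum] at h
  refine ⟨h.1, fun m hmM l z => ?_⟩
  have : NeZero m := ⟨fun h => NeZero.ne M (zero_dvd_iff.1 (h ▸ hmM))⟩
  have hm := NeZero.ne (m : ℂ)
  obtain ⟨q, rfl⟩ := id hmM
  have hper : jTheta m l (τ - 4 * (m * q : ℕ) * n) z = jTheta m l τ z := by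
    have := jTheta_add_intCast (m := m) l (-(4 * (m * q : ℕ) * n)) τ z
    push_cast at this ⊢
    rw [sub_eq_add_neg, this, ee_eq_one_iff.2 ⟨-(l ^ 2 * q * n), by push_cast; field_simp⟩, one_mul]
  rw [h.2 m hmM, hper]

/-- Translating `τ` by multiples of `4M` moves `d` through its class modulo `4Mc`, where Dirichlet's
theorem provides a prime. -/
lemma exists_isThetaFactor {d : ℤ} (hdet : a * d - b * c = 1) (hb : 4 * (M : ℤ) ∣ b)
    (hc : 4 * (M : ℤ) ∣ c) (hd : 4 * (M : ℤ) ∣ d - 1) (hτ : 0 < τ.im) :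
    ∃ χ, IsThetaFactor M a b c d τ χ := by
  rcases eq_or_ne c 0 with rfl | hc0
  · obtain ⟨rfl, rfl⟩ : a = 1 ∧ d = 1 := by
      have had : a * d = 1 := by simpa using hdet
      rcases Int.mul_eq_one_iff_eq_one_or_neg_one.1 had with h | ⟨-, rfl⟩
      · exact h
      · have := Int.le_of_dvd two_pos ((Int.dvd_neg).1 hd : 4 * (M : ℤ) ∣ 2)
        have := NeZero.pos M
        lia
    obtain ⟨n, rfl⟩ := hb
    exact ⟨1, .of_sub_intCast (-n) ⟨by simp, fun m _ l z => by simp [ee_zero]⟩⟩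
  have : NeZero (4 * M * c).natAbs := ⟨by simp [NeZero.ne M, hc0]⟩
  have hunit : IsUnit (d : ZMod (4 * M * c).natAbs) := by
    obtain ⟨b', rfl⟩ := hb
    refine IsUnit.of_mul_eq_one (a : ZMod (4 * M * c).natAbs) ?_
    rw [← Int.cast_mul, ← Int.cast_one, ZMod.intCast_eq_intCast_iff_dvd_sub, Int.natAbs_dvd]
    exact ⟨-b', by linear_combination -hdet⟩
  obtain ⟨p, -, hp, hpd⟩ := Nat.forall_exists_prime_gt_and_eq_mod hunit 0
  obtain ⟨n, hn⟩ : 4 * M * c ∣ p - d := by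
    rwa [← Int.cast_natCast p, eq_comm, ZMod.intCast_eq_intCast_iff_dvd_sub, Int.natAbs_dvd] at hpd
  obtain rfl : d = p - c * (4 * M * n) := by linear_combination -hn
  have hpM : p ≡ 1 [MOD 4 * M] := by
    refine (Nat.modEq_iff_dvd.2 ?_).symm
    push_cast
    exact ((hd.add (Dvd.intro (n * c) rfl)).trans (dvd_of_eq (by ring)))
  have hτ' : 0 < (τ - 4 * M * n : ℂ).im := by
    simpa using hτ
  obtain ⟨χ, hχ⟩ := exists_isThetaFactor_of_prime (a := a) (b := b + a * (4 * M * n)) hp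
    (by linear_combination hdet) hpM (hb.add ⟨a * n, by ring⟩) hc hτ'
  exact ⟨χ, .of_sub_intCast n (by simpa using hχ)⟩

end ThetaFactor
section ModularGenerators

open UpperHalfPlane in
/-- The automorphy factor of weight `k` and index `m` of Jacobi forms. -/
def jacobiFactor (k : ℤ) (m : ℕ) (g : Matrix.SpecialLinearGroup (Fin 2) ℤ) (τ : ℍ) (z : ℂ) : ℂ :=
  denom g τ ^ k * ee (m * g 1 0 * z ^ 2 / denom g τ)

open UpperHalfPlane

variable {k : ℤ} {m : ℕ}

lemma denom_mul_eq (g h : Matrix.SpecialLinearGroup (Fin 2) ℤ) (τ : ℍ) :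
    denom (g * h : Matrix.SpecialLinearGroup (Fin 2) ℤ) τ = denom g (h • τ : ℍ) * denom h τ := by
  rw [map_mul, map_mul, denom_cocycle _ _ τ.im_ne_zero, coe_specialLinearGroup_apply]
  rfl

lemma coe_smul_eq_div (g : Matrix.SpecialLinearGroup (Fin 2) ℤ) (τ : ℍ) :
    ((g • τ : ℍ) : ℂ) = (g 0 0 * τ + g 0 1) / (g 1 0 * τ + g 1 1) := by
  simp only [coe_specialLinearGroup_apply, eq_intCast, ofReal_intCast]

lemma im_div_denom_pos {a b c d : ℤ} (hdet : a * d - b * c = 1) {τ : ℂ} (hτ : 0 < τ.im) :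
    0 < ((a * τ + b) / (c * τ + d)).im := by
  let g : Matrix.SpecialLinearGroup (Fin 2) ℤ :=
    ⟨!![a, b; c, d], by rw [Matrix.det_fin_two_of, hdet]⟩
  have hg := (g • (⟨τ, hτ⟩ : ℍ)).im_pos
  rw [← coe_im, coe_smul_eq_div] at hg
  exact hg

lemma jacobiFactor_one (τ : ℍ) (z : ℂ) : jacobiFactor k m 1 τ z = 1 := by
  simp [jacobiFactor, ee_zero]

lemma jacobiFactor_mul (g h : Matrix.SpecialLinearGroup (Fin 2) ℤ) (τ : ℍ) (z : ℂ) :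
    jacobiFactor k m (g * h) τ z =
      jacobiFactor k m g (h • τ) (z / denom h τ) * jacobiFactor k m h τ z := by
  have hg := UpperHalfPlane.denom_ne_zero g (h • τ)
  have hh := UpperHalfPlane.denom_ne_zero h τ
  have hc : ((g * h) 1 0 : ℂ) * denom h τ = g 1 0 + h 1 0 * (denom g (h • τ : ℍ) * denom h τ) := by
    have hdet : (h 0 0 * h 1 1 - h 0 1 * h 1 0 : ℂ) = 1 := by
      exact_mod_cast (Matrix.det_fin_two h.1).symm.trans h.2
    rw [← denom_mul_eq, ModularGroup.denom_apply, ModularGroup.denom_apply]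
    simp only [Matrix.SpecialLinearGroup.coe_mul, Matrix.mul_apply, Fin.sum_univ_two]
    push_cast
    linear_combination (g 1 0 : ℂ) * hdet
  rw [jacobiFactor, jacobiFactor, jacobiFactor, denom_mul_eq, mul_zpow, mul_mul_mul_comm, ← ee_add]
  congr 2
  field_simp
  linear_combination (m * z ^ 2 : ℂ) * hc

/-- The elements of `SL(2, ℤ)` under which `φ` transforms with weight `k` and index `m`. -/
def jacobiStabilizer (k : ℤ) (m : ℕ) (φ : ℂ → ℂ → ℂ) :
    Subgroup (Matrix.SpecialLinearGroup (Fin 2) ℤ) where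
  carrier := {g | ∀ (τ : ℍ) (z : ℂ),
    φ (g • τ : ℍ) (z / denom g τ) = jacobiFactor k m g τ z * φ τ z}
  one_mem' τ z := by simp [jacobiFactor_one]
  mul_mem' {g h} hg hh τ z := by
    rw [denom_mul_eq, mul_comm, ← div_div, mul_smul, hg, hh, jacobiFactor_mul, mul_assoc]
  inv_mem' {g} hg τ z := by
    have hfactor := jacobiFactor_mul (k := k) (m := m) g g⁻¹ τ z
    have hpoint := hg (g⁻¹ • τ) (z / denom (g⁻¹ : Matrix.SpecialLinearGroup (Fin 2) ℤ) τ)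
    rw [smul_inv_smul, div_div, mul_comm (denom _ _), ← denom_mul_eq, mul_inv_cancel] at hpoint
    rw [mul_inv_cancel, jacobiFactor_one] at hfactor
    simp only [map_one, denom_one, div_one] at hpoint
    rw [hpoint, ← mul_assoc, mul_comm (jacobiFactor k m g⁻¹ τ z), ← hfactor, one_mul]

lemma mem_jacobiStabilizer {φ : ℂ → ℂ → ℂ} {g : Matrix.SpecialLinearGroup (Fin 2) ℤ} :
    g ∈ jacobiStabilizer k m φ ↔ ∀ τ : ℂ, 0 < τ.im → ∀ z,
      φ ((g 0 0 * τ + g 0 1) / (g 1 0 * τ + g 1 1)) (z / (g 1 0 * τ + g 1 1)) =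
        (g 1 0 * τ + g 1 1) ^ k * ee (m * g 1 0 * z ^ 2 / (g 1 0 * τ + g 1 1)) * φ τ z := by
  refine ⟨fun h τ hτ z => ?_, fun h τ z => ?_⟩
  · have hpoint := h ⟨τ, hτ⟩ z
    rw [coe_smul_eq_div, jacobiFactor, ModularGroup.denom_apply] at hpoint
    exact hpoint
  · simpa only [coe_smul_eq_div, jacobiFactor, ModularGroup.denom_apply] using h τ τ.im_pos z

lemma modularLaw_of_S_of_T {φ : ℂ → ℂ → ℂ}
    (hS : ∀ τ : ℂ, 0 < τ.im → ∀ z, φ (-1 / τ) (z / τ) = τ ^ k * ee (m * z ^ 2 / τ) * φ τ z)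
    (hT : ∀ τ : ℂ, 0 < τ.im → ∀ z, φ (τ + 1) z = φ τ z) : ModularLaw k m φ := by
  have htop : jacobiStabilizer k m φ = ⊤ := by
    rw [eq_top_iff, ← SpecialLinearGroup.SL2Z_generators, Subgroup.closure_le]
    rintro g (rfl | rfl) <;> refine mem_jacobiStabilizer.2 fun τ hτ z => ?_
    · simpa [ModularGroup.S] using hS τ hτ z
    · simpa [ModularGroup.T, ee_zero] using hT τ hτ z
  intro τ hτ z a b c d hdet
  let g : Matrix.SpecialLinearGroup (Fin 2) ℤ :=
    ⟨!![a, b; c, d], by rw [Matrix.det_fin_two_of, hdet]⟩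
  have hg : g ∈ jacobiStabilizer k m φ := htop ▸ Subgroup.mem_top _
  exact mem_jacobiStabilizer.1 hg τ hτ z

end ModularGenerators
section FinitePart

lemma dvd_natCast_sub_iff_eq {M j l : ℕ} (hj : j < M) (hl : l < M) :
    (M : ℤ) ∣ j - l ↔ l = j := by
  rw [← Nat.modEq_iff_dvd, Nat.ModEq, Nat.mod_eq_of_lt hl, Nat.mod_eq_of_lt hj]

lemma sum_ee_intCast_mul_div (M : ℕ) [NeZero M] (n : ℤ) :
    ∑ l ∈ Finset.range M, ee (n * l / M) = if (M : ℤ) ∣ n then (M : ℂ) else 0 := by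
  have hM := NeZero.ne (M : ℂ)
  have hpow (l : ℕ) : ee (n * l / M) = ee (n / M) ^ l := by
    rw [ee, ee, ← Complex.exp_nat_mul]
    congr 1
    ring
  have hone : ee (n / M) = 1 ↔ (M : ℤ) ∣ n := by
    rw [ee_eq_one_iff]
    refine exists_congr fun t => ?_
    rw [div_eq_iff hM, mul_comm]
    norm_cast
  have hend : ee (n / M) ^ M = 1 := by rw [← hpow, mul_div_cancel_right₀ _ hM, ee_intCast]
  simp_rw [hpow]
  split_ifs with h
  · simp [hone.2 h]
  · rw [geom_sum_eq (mt hone.1 h), hend, sub_self, zero_div]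

lemma integral_ee_intCast_mul (n : ℤ) :
    ∫ x in (0 : ℝ)..1, ee (n * x) = if n = 0 then 1 else 0 := by
  split_ifs with hn
  · simp [hn, ee_zero]
  · have hexp (x : ℝ) : ee (n * x) = Complex.exp (2 * Real.pi * I * n * x) := by
      rw [ee, mul_assoc _ (n : ℂ)]
    have hc : 2 * (Real.pi : ℂ) * I * n ≠ 0 :=
      mul_ne_zero Complex.two_pi_I_ne_zero (Int.cast_ne_zero.2 hn)
    simp_rw [hexp, integral_exp_mul_complex hc, ← hexp]
    simp [ee_intCast, ee_zero]

variable {m : ℕ} [NeZero m] {k : ℤ} {H : ℤ → ℂ → ℂ} {τ : ℂ}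

lemma integral_jTheta_mul_ee (l r : ℤ) (hτ : 0 < τ.im) :
    ∫ x in (0 : ℝ)..1, jTheta m l τ x * ee (-(r * x)) =
      if 2 * (m : ℤ) ∣ r - l then ee ((r : ℂ) ^ 2 / (4 * m) * τ) else 0 := by
  let q (n : ℤ) : ℂ := ee ((l + 2 * m * n) ^ 2 / (4 * m) * τ)
  have hterm (x : ℝ) : jTheta m l τ x * ee (-(r * x)) =
      ∑' n : ℤ, q n * ee ((l + 2 * m * n - r : ℤ) * x) := by
    rw [jTheta, ← tsum_mul_right]
    refine tsum_congr fun n => ?_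
    rw [← ee_add, ← ee_add]
    congr 1
    push_cast
    ring
  have hnorm (n : ℤ) (x : ℝ) : ‖q n * ee ((l + 2 * m * n - r : ℤ) * x)‖ = ‖q n‖ := by
    rw [norm_mul, norm_ee ((_ : ℤ) * _)]
    simp
  have hvol : volume.real (Set.Ioc (0 : ℝ) 1) = 1 := by simp
  have hq : Summable fun n => ‖q n‖ := by simpa [q] using (summable_jTheta l hτ 0).norm
  have hswap := hasSum_integral_of_summable_integral_norm
    (μ := volume.restrict (Set.Ioc (0 : ℝ) 1))
    (F := fun n (x : ℝ) => q n * ee ((l + 2 * m * n - r : ℤ) * x))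
    (fun n => (Continuous.intervalIntegrable (by fun_prop) 0 1).1) (by
      simpa only [hnorm, integral_const, measureReal_restrict_apply_univ, hvol, one_smul] using hq)
  simp_rw [← hterm, ← intervalIntegral.integral_of_le zero_le_one,
    intervalIntegral.integral_const_mul, integral_ee_intCast_mul, mul_ite, mul_one, mul_zero]
    at hswap
  rw [← hswap.tsum_eq]
  have hm : (m : ℤ) ≠ 0 := NeZero.ne _
  split_ifs with h
  · obtain ⟨n₀, hn₀⟩ := h
    obtain rfl : r = l + 2 * m * n₀ := by linear_combination hn₀
    rw [tsum_eq_single n₀ fun n hn => if_neg fun h => hn ?_]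
    · simp [q]
    · exact mul_left_cancel₀ (mul_ne_zero two_ne_zero hm) (by linear_combination h)
  · exact (tsum_congr fun n => if_neg fun hn => h ⟨n, by linear_combination -hn⟩).trans tsum_zero

lemma eq_zero_of_sum_mul_jTheta_eq_zero (hτ : 0 < τ.im) {C : ℕ → ℂ}
    (h : ∀ z, ∑ l ∈ Finset.range (2 * m), C l * jTheta m l τ z = 0) {r : ℕ} (hr : r < 2 * m) :
    C r = 0 := by
  have hcont (l : ℕ) : Continuous fun x : ℝ => jTheta m l τ x * ee (-(r * x)) :=
    ((differentiable_jTheta l hτ).continuous.comp Complex.continuous_ofReal).mul (by fun_prop)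
  have hcoeff : ∑ l ∈ Finset.range (2 * m),
      C l * ∫ x in (0 : ℝ)..1, jTheta m l τ x * ee (-(r * x)) = 0 := by
    simp_rw [← intervalIntegral.integral_const_mul]
    rw [← intervalIntegral.integral_finsetSum
      fun l _ => ((hcont l).const_mul (C l)).intervalIntegrable 0 1]
    simp_rw [← mul_assoc, ← Finset.sum_mul, h, zero_mul, intervalIntegral.integral_zero]
  have hdvd {l : ℕ} (hl : l ∈ Finset.range (2 * m)) : 2 * (m : ℤ) ∣ (r : ℤ) - l ↔ l = r := by
    exact_mod_cast dvd_natCast_sub_iff_eq hr (Finset.mem_range.1 hl)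
  have hcoeff_eq (l : ℕ) := integral_jTheta_mul_ee (m := m) l r hτ
  simp only [Int.cast_natCast] at hcoeff_eq
  rw [Finset.sum_congr rfl fun l hl => by rw [hcoeff_eq, if_congr (hdvd hl) rfl rfl]] at hcoeff
  simpa [hr, ee_ne_zero] using hcoeff

lemma finitePart_ellipticLaw : EllipticLaw m (finitePart m H) := by
  intro τ hτ z lam mu
  rw [finitePart, finitePart, Finset.mul_sum]
  refine Finset.sum_congr rfl fun l _ => ?_
  rw [jTheta_ellipticLaw l τ hτ z lam mu, mul_left_comm]

lemma finitePart_add_one (hT : ∀ l : ℤ, H l (τ + 1) = ee (-((l : ℂ) ^ 2 / (4 * m))) * H l τ)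
    (z : ℂ) : finitePart m H (τ + 1) z = finitePart m H τ z := by
  refine Finset.sum_congr rfl fun l _ => ?_
  have hθ := jTheta_add_intCast (m := m) l 1 τ z
  rw [Int.cast_one, mul_one] at hθ
  rw [hT, hθ, mul_mul_mul_comm, ← ee_add, neg_add_cancel, ee_zero, one_mul]

lemma sum_sum_mul_sum_ee (u v : ℕ → ℂ) :
    ∑ l ∈ Finset.range (2 * m), (∑ j ∈ Finset.range (2 * m), ee (j * l / (2 * m)) * u j) *
        ∑ i ∈ Finset.range (2 * m), ee (-(i * l / (2 * m))) * v i =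
      2 * m * ∑ j ∈ Finset.range (2 * m), u j * v j := by
  simp_rw [Finset.sum_mul_sum]
  rw [Finset.sum_comm, Finset.mul_sum]
  refine Finset.sum_congr rfl fun j hj => ?_
  have horth {i : ℕ} (hi : i ∈ Finset.range (2 * m)) :
      ∑ l ∈ Finset.range (2 * m), ee (((j - i : ℤ) : ℂ) * l / (2 * m : ℕ)) =
        if i = j then 2 * (m : ℂ) else 0 := by
    have := sum_ee_intCast_mul_div (2 * m) (j - i)
    rw [if_congr (dvd_natCast_sub_iff_eq (Finset.mem_range.1 hj) (Finset.mem_range.1 hi)) rfl rfl]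
      at this
    simpa only [Nat.cast_mul, Nat.cast_ofNat] using this
  calc ∑ l ∈ Finset.range (2 * m), ∑ i ∈ Finset.range (2 * m),
        ee (j * l / (2 * m)) * u j * (ee (-(i * l / (2 * m))) * v i)
      = ∑ i ∈ Finset.range (2 * m), (∑ l ∈ Finset.range (2 * m),
          ee (((j - i : ℤ) : ℂ) * l / (2 * m : ℕ))) * (u j * v i) := by
        rw [Finset.sum_comm]
        refine Finset.sum_congr rfl fun i _ => ?_
        rw [Finset.sum_mul]
        refine Finset.sum_congr rfl fun l _ => ?_
        rw [mul_mul_mul_comm, ← ee_add]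
        congr 2
        push_cast
        ring
    _ = ∑ i ∈ Finset.range (2 * m), (if i = j then 2 * (m : ℂ) else 0) * (u j * v i) :=
        Finset.sum_congr rfl fun i hi => by rw [horth hi]
    _ = 2 * m * (u j * v j) := by simp [Finset.mem_range.1 hj]

lemma conj_cpow_one_half_mul_self (x : ℂ) :
    (starRingEnd ℂ) (x ^ (1 / 2 : ℂ)) * x ^ (1 / 2 : ℂ) = ‖x‖ := by
  rw [Complex.conj_mul', ← Complex.ofReal_pow, ← norm_pow, cpow_one_half_sq]

lemma finitePart_neg_inv (hτ : 0 < τ.im)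
    (hS : ∀ l : ℤ, ‖τ‖ * H l (-1 / τ) =
      τ ^ k * (starRingEnd ℂ) ((-I * (τ / (2 * m))) ^ (1 / 2 : ℂ)) *
        ∑ j ∈ Finset.range (2 * m), ee (j * l / (2 * m)) * H j τ) (z : ℂ) :
    finitePart m H (-1 / τ) (z / τ) = τ ^ k * ee (m * z ^ 2 / τ) * finitePart m H τ z := by
  have hτ0 : τ ≠ 0 := by rintro rfl; simp at hτ
  have hm := NeZero.ne (m : ℂ)
  have hnorm : (‖-I * (τ / (2 * m))‖ : ℂ) * (2 * m) = ‖τ‖ := by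
    simp only [norm_mul, norm_neg, Complex.norm_I, norm_div, Complex.norm_ofNat,
      Complex.norm_natCast]
    push_cast
    field_simp
  apply mul_left_cancel₀ (Complex.ofReal_ne_zero.2 (norm_ne_zero_iff.2 hτ0))
  set root := (-I * (τ / (2 * m))) ^ (1 / 2 : ℂ)
  calc (‖τ‖ : ℂ) * finitePart m H (-1 / τ) (z / τ)
      = τ ^ k * ee (m * z ^ 2 / τ) * ((starRingEnd ℂ) root * root) *
          ∑ l ∈ Finset.range (2 * m),
            (∑ j ∈ Finset.range (2 * m), ee (j * l / (2 * m)) * H j τ) *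
              ∑ i ∈ Finset.range (2 * m), ee (-(i * l / (2 * m))) * jTheta m i τ z := by
        rw [finitePart, Finset.mul_sum, Finset.mul_sum]
        refine Finset.sum_congr rfl fun l _ => ?_
        have hl := hS l
        have hθ := jTheta_neg_inv_eq_sum (m := m) l hτ z
        rw [Int.cast_natCast] at hl hθ
        rw [← mul_assoc, hl, hθ]
        ring
    _ = ‖τ‖ * (τ ^ k * ee (m * z ^ 2 / τ) * finitePart m H τ z) := by
        rw [sum_sum_mul_sum_ee, conj_cpow_one_half_mul_self, finitePart, ← hnorm]
        ring

lemma finitePart_modularLaw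
    (hS : ∀ l : ℤ, ∀ τ : ℂ, 0 < τ.im → ‖τ‖ * H l (-1 / τ) =
      τ ^ k * (starRingEnd ℂ) ((-I * (τ / (2 * m))) ^ (1 / 2 : ℂ)) *
        ∑ j ∈ Finset.range (2 * m), ee (j * l / (2 * m)) * H j τ)
    (hT : ∀ l : ℤ, ∀ τ : ℂ, 0 < τ.im → H l (τ + 1) = ee (-((l : ℂ) ^ 2 / (4 * m))) * H l τ) :
    ModularLaw k m (finitePart m H) :=
  modularLaw_of_S_of_T (fun τ hτ => finitePart_neg_inv hτ fun l => hS l τ hτ)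
    fun τ hτ => finitePart_add_one fun l => hT l τ hτ

lemma mul_eq_mul_of_isThetaFactor {a b c d : ℤ} {χ : ℂ} (hdet : a * d - b * c = 1) (hτ : 0 < τ.im)
    (hmod : ModularLaw k m (finitePart m H)) (hχ : IsThetaFactor m a b c d τ χ) {l : ℕ}
    (hl : l < 2 * m) :
    χ * H l ((a * τ + b) / (c * τ + d)) = (c * τ + d) ^ k * H l τ := by
  refine sub_eq_zero.1 (eq_zero_of_sum_mul_jTheta_eq_zero hτ (m := m)
    (C := fun l => χ * H l ((a * τ + b) / (c * τ + d)) - (c * τ + d) ^ k * H l τ)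
    (fun z => mul_left_cancel₀ (ee_ne_zero (m * c * z ^ 2 / (c * τ + d))) ?_) hl)
  have hz := hmod τ hτ z a b c d hdet
  simp_rw [finitePart, hχ.2 m dvd_rfl] at hz
  rw [mul_zero, Finset.mul_sum, ← sub_eq_zero.2 hz, Finset.mul_sum, ← Finset.sum_sub_distrib]
  exact Finset.sum_congr rfl fun l _ => by ring

lemma mul_stdTheta_zpow_of_isThetaFactor {a b c d : ℤ} {χ : ℂ} (hdet : a * d - b * c = 1)
    (hτ : 0 < τ.im) (hmod : ModularLaw k m (finitePart m H)) (hχ : IsThetaFactor m a b c d τ χ)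
    {l : ℕ} (hl : l < 2 * m) :
    H l ((a * τ + b) / (c * τ + d)) * stdTheta τ ^ (2 * k - 1) =
      H l τ * stdTheta ((a * τ + b) / (c * τ + d)) ^ (2 * k - 1) := by
  have hχ0 : χ ≠ 0 := by
    rintro rfl
    exact denom_ne_zero hτ hdet (by simpa using hχ.1.symm)
  have hθ : stdTheta ((a * τ + b) / (c * τ + d)) = χ * stdTheta τ := by
    have := hχ.2 1 (one_dvd m) 0 0
    simpa [stdTheta_eq_jTheta, ee_zero] using this
  have hH : H l ((a * τ + b) / (c * τ + d)) = χ ^ (2 * k - 1) * H l τ := by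
    apply mul_left_cancel₀ hχ0
    rw [mul_eq_mul_of_isThetaFactor hdet hτ hmod hχ hl, ← hχ.1, ← mul_assoc, ← zpow_one_add₀ hχ0,
      add_sub_cancel, zpow_mul, zpow_ofNat]
  rw [hH, hθ, mul_zpow]
  ring

lemma mul_stdTheta_zpow_of_level {a b c d : ℤ} (hdet : a * d - b * c = 1)
    (hb : 4 * (m : ℤ) ∣ b) (hc : 4 * (m : ℤ) ∣ c) (hd : 4 * (m : ℤ) ∣ d - 1) (hτ : 0 < τ.im)
    (hmod : ModularLaw k m (finitePart m H))
    (hper : ∀ l n : ℤ, ∀ τ : ℂ, 0 < τ.im → H (l + 2 * m * n) τ = H l τ) (l : ℤ) :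
    H l ((a * τ + b) / (c * τ + d)) * stdTheta τ ^ (2 * k - 1) =
      H l τ * stdTheta ((a * τ + b) / (c * τ + d)) ^ (2 * k - 1) := by
  obtain ⟨χ, hχ⟩ := exists_isThetaFactor hdet hb hc hd hτ
  have h2m : (0 : ℤ) < 2 * m := by exact_mod_cast Nat.mul_pos two_pos (NeZero.pos m)
  lift l % (2 * m) to ℕ using Int.emod_nonneg l h2m.ne' with r hr
  have hr_lt : r < 2 * m := by exact_mod_cast hr ▸ Int.emod_lt_of_pos l h2m
  have hl : l = r + 2 * m * (l / (2 * m)) := by rw [hr, Int.emod_add_mul_ediv]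
  rw [hl, hper _ _ _ hτ, hper _ _ _ (im_div_denom_pos hdet hτ)]
  exact mul_stdTheta_zpow_of_isThetaFactor hdet hτ hmod hχ hr_lt

end FinitePart

section SimpleResidues

/-- The function `f` has at most a simple pole at `a`, with residue `r`. -/
def HasSimpleResidueAt (f : ℂ → ℂ) (a r : ℂ) : Prop :=
  Tendsto (fun w => (w - a) * f w) (𝓝[≠] a) (𝓝 r)

variable {f g : ℂ → ℂ} {a b r s : ℂ}

lemma hasSimpleResidueAt_zero (h : ContinuousAt f a) : HasSimpleResidueAt f a 0 := by
  have hmul : ContinuousAt (fun w => (w - a) * f w) a := by fun_prop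
  simpa only [HasSimpleResidueAt, sub_self, zero_mul] using
    hmul.tendsto.mono_left nhdsWithin_le_nhds

namespace HasSimpleResidueAt

lemma sub (hf : HasSimpleResidueAt f a r) (hg : HasSimpleResidueAt g a s) :
    HasSimpleResidueAt (fun w => f w - g w) a (r - s) :=
  (Tendsto.sub hf hg).congr fun _ => (mul_sub _ _ _).symm

lemma mul_left (hg : ContinuousAt g a) (hf : HasSimpleResidueAt f a r) :
    HasSimpleResidueAt (fun w => g w * f w) a (g a * r) :=
  (Tendsto.mul (hg.tendsto.mono_left nhdsWithin_le_nhds) hf).congr fun _ => mul_left_comm _ _ _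

lemma const_mul (c : ℂ) (hf : HasSimpleResidueAt f a r) :
    HasSimpleResidueAt (fun w => c * f w) a (c * r) :=
  hf.mul_left continuousAt_const

lemma fun_sum {ι : Type*} {W : Finset ι} {F : ι → ℂ → ℂ} {R : ι → ℂ}
    (h : ∀ i ∈ W, HasSimpleResidueAt (F i) a (R i)) :
    HasSimpleResidueAt (fun w => ∑ i ∈ W, F i w) a (∑ i ∈ W, R i) :=
  (tendsto_finsetSum W h).congr fun _ => (Finset.mul_sum _ _ _).symm

lemma comp_sub_const (b : ℂ) (hf : HasSimpleResidueAt f a r) :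
    HasSimpleResidueAt (fun w => f (w - b)) (a + b) r := by
  rw [HasSimpleResidueAt, show a + b = Homeomorph.addRight b a from rfl,
    ← (Homeomorph.addRight b).map_punctured_nhds_eq, tendsto_map'_iff]
  refine Tendsto.congr (fun w => ?_) hf
  simp only [Function.comp_apply, Homeomorph.coe_addRight, add_sub_cancel_right,
    add_sub_add_right_eq_sub]

lemma of_ee_sub_eq_one (hf : HasSimpleResidueAt f a r) (hper : Function.Periodic f 1)
    (h : ee (b - a) = 1) : HasSimpleResidueAt f b r := by
  obtain ⟨n, hn⟩ := ee_eq_one_iff.1 h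
  have hshift := hf.comp_sub_const n
  have hfun : (fun w => f (w - n)) = f :=
    funext fun w => by simpa using hper.sub_int_mul_eq n (x := w)
  rwa [hfun, ← hn, add_sub_cancel] at hshift

lemma differentiableAt_limUnder (hf : HasSimpleResidueAt f a 0)
    (hd : ∀ᶠ z in 𝓝[≠] a, DifferentiableAt ℂ f z) :
    DifferentiableAt ℂ (fun z => limUnder (𝓝[≠] z) f) a := by
  obtain ⟨s, hs, hso, has⟩ := eventually_nhds_iff.1 (eventually_nhdsWithin_iff.1 hd)
  have hlittle : (fun z => f z - f a) =o[𝓝[≠] a] fun z => (z - a)⁻¹ := by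
    rw [Asymptotics.isLittleO_iff_tendsto']
    · have hsub := hf.sub (hasSimpleResidueAt_zero (f := fun _ => f a) continuousAt_const)
      rw [sub_zero] at hsub
      exact hsub.congr fun z => by rw [div_inv_eq_mul, mul_comm]
    · filter_upwards [self_mem_nhdsWithin] with z hz h0
      exact absurd (inv_eq_zero.1 h0) (sub_ne_zero.2 hz)
  have hupdate := Complex.differentiableOn_update_limUnder_of_isLittleO (hso.mem_nhds has)
    (fun z hz => (hs z hz.1 hz.2).differentiableWithinAt) hlittle
  refine (hupdate.congr fun z hz => ?_).differentiableAt (hso.mem_nhds has)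
  rcases eq_or_ne z a with rfl | hza
  · rw [Function.update_self]
  · rw [Function.update_of_ne hza]
    exact ((hs z hz hza).continuousAt.tendsto.mono_left nhdsWithin_le_nhds).limUnder_eq

end HasSimpleResidueAt

lemma periodic_limUnder (hper : Function.Periodic f 1) :
    Function.Periodic (fun z => limUnder (𝓝[≠] z) f) 1 := by
  intro z
  have hmap := (Homeomorph.addRight (1 : ℂ)).map_punctured_nhds_eq z
  simp only [Homeomorph.coe_addRight] at hmap
  simp only [limUnder, ← hmap, Filter.map_map]
  exact congr_arg (fun g => lim (map g (𝓝[≠] z))) (funext hper)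

end SimpleResidues

section CotangentKernel

/-- The `1`-periodic function `π cot(πw)`, written as a rational function of `ee w`. It has simple
poles of residue `1` at the integers and no others. -/
def cotKernel (w : ℂ) : ℂ := 2 * (Real.pi : ℂ) * I * (1 / 2 + 1 / (ee w - 1))

lemma periodic_cotKernel : Function.Periodic cotKernel 1 := fun w => by
  rw [cotKernel, cotKernel, ee_eq_ee_of_sub_eq_intCast 1 (by push_cast; ring : w + 1 - w = _)]

lemma cotKernel_neg {w : ℂ} (h : ee w ≠ 1) : cotKernel (-w) = -cotKernel w := by
  have h₁ : ee w - 1 ≠ 0 := sub_ne_zero.2 h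
  have h₂ : 1 - ee w ≠ 0 := sub_ne_zero.2 h.symm
  have h₃ := ee_ne_zero w
  have hinv : (ee w)⁻¹ - 1 = (1 - ee w) / ee w := by field_simp
  rw [cotKernel, cotKernel, ee_neg, hinv]
  field_simp
  ring

lemma differentiableAt_cotKernel {w : ℂ} (h : ee w ≠ 1) : DifferentiableAt ℂ cotKernel w := by
  have hne : ee w - 1 ≠ 0 := sub_ne_zero.2 h
  unfold cotKernel
  fun_prop (disch := assumption)

lemma differentiableAt_cotKernel_sub {a w : ℂ} (h : ee (w - a) ≠ 1) :
    DifferentiableAt ℂ (fun z => cotKernel (z - a)) w :=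
  (differentiableAt_cotKernel h).comp w (f := fun z => z - a) (by fun_prop)

lemma eventually_ee_sub_ne_one (a w : ℂ) : ∀ᶠ z in 𝓝[≠] w, ee (z - a) ≠ 1 :=
  ((hasDerivAt_ee (w - a)).comp_sub_const w a).eventually_ne
    (mul_ne_zero Complex.two_pi_I_ne_zero (ee_ne_zero _))

lemma hasSimpleResidueAt_cotKernel : HasSimpleResidueAt cotKernel 0 1 := by
  have hslope := hasDerivAt_ee 0
  rw [ee_zero, mul_one, hasDerivAt_iff_tendsto_slope] at hslope
  have hmain := (hslope.inv₀ Complex.two_pi_I_ne_zero).const_mul (2 * (Real.pi : ℂ) * I)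
  rw [mul_inv_cancel₀ Complex.two_pi_I_ne_zero] at hmain
  have hconst := hasSimpleResidueAt_zero (a := 0)
    (continuousAt_const (y := 2 * (Real.pi : ℂ) * I * (1 / 2)))
  have hsum := hmain.add hconst
  rw [add_zero] at hsum
  refine hsum.congr fun w => ?_
  rw [slope_def_field, ee_zero, cotKernel, inv_div]
  ring

lemma hasSimpleResidueAt_cotKernel_sub {a w : ℂ} (h : ee (w - a) = 1) :
    HasSimpleResidueAt (fun z => cotKernel (z - a)) w 1 := by
  have hshift := hasSimpleResidueAt_cotKernel.comp_sub_const a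
  rw [zero_add] at hshift
  exact hshift.of_ee_sub_eq_one (periodic_cotKernel.sub_const a) h

lemma ee_ne_one_of_im_ne_zero {w : ℂ} (hw : w.im ≠ 0) : ee w ≠ 1 := fun h => by
  obtain ⟨n, rfl⟩ := ee_eq_one_iff.1 h
  simp at hw

lemma integral_add_eq_integral_add_im_mul_I {f : ℂ → ℂ} (hper : Function.Periodic f 1) (w : ℂ) :
    ∫ u in (0 : ℝ)..1, f (u + w) = ∫ u in (0 : ℝ)..1, f (u + w.im * I) := by
  have hline : Function.Periodic (fun x : ℝ => f (x + w.im * I)) 1 := fun x => by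
    simp only [Complex.ofReal_add, Complex.ofReal_one, add_right_comm, hper _]
  have htranslate := hline.intervalIntegral_add_eq w.re 0
  have hsubst := intervalIntegral.integral_comp_add_right (a := 0) (b := 1)
    (fun x : ℝ => f (x + w.im * I)) w.re
  rw [add_comm 1, zero_add] at hsubst
  rw [zero_add, ← hsubst] at htranslate
  simpa only [zero_add, Complex.ofReal_add, add_assoc, Complex.re_add_im] using htranslate

lemma integral_comp_ee_add {F : ℂ → ℂ} {w : ℂ}
    (hF : DiffContOnCl ℂ F (Metric.ball 0 ‖ee w‖)) :
    ∫ u in (0 : ℝ)..1, F (ee (u + w)) = F 0 := by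
  have hper : Function.Periodic (fun w => F (ee w)) 1 := fun w => by
    simp only [ee_eq_ee_of_sub_eq_intCast 1 (by push_cast; ring : w + 1 - w = _)]
  have hcircle (u : ℝ) : ee (u + w.im * I) = circleMap 0 ‖ee w‖ (u * (2 * Real.pi)) := by
    rw [norm_ee, circleMap_zero, Complex.ofReal_exp, ← Complex.exp_add, ee]
    congr 1
    push_cast
    linear_combination 2 * (Real.pi : ℂ) * w.im * I_sq
  rw [← abs_of_nonneg (norm_nonneg (ee w))] at hF
  rw [integral_add_eq_integral_add_im_mul_I hper, ← hF.circleAverage, Real.circleAverage_def]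
  simp only [hcircle]
  rw [intervalIntegral.integral_comp_mul_right (fun θ => F (circleMap 0 ‖ee w‖ θ))
    Real.two_pi_pos.ne', zero_mul, one_mul]

lemma integral_cotKernel_add_of_im_pos {w : ℂ} (hw : 0 < w.im) :
    ∫ u in (0 : ℝ)..1, cotKernel (u + w) = -(Real.pi * I) := by
  have hlt : ‖ee w‖ < 1 := by
    rw [norm_ee, Real.exp_lt_one_iff, neg_lt_zero]
    positivity
  have hdiff : DiffContOnCl ℂ (fun z => 2 * (Real.pi : ℂ) * I * (1 / 2 + 1 / (z - 1)))
      (Metric.ball 0 ‖ee w‖) := by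
    refine DifferentiableOn.diffContOnCl fun z hz => ?_
    have hz₁ : z - 1 ≠ 0 := sub_ne_zero.2 fun h => by
      have := mem_closedBall_zero_iff.1 (Metric.closure_ball_subset_closedBall hz)
      rw [h, norm_one] at this
      linarith
    fun_prop (disch := assumption)
  simp only [cotKernel, integral_comp_ee_add hdiff]
  ring

lemma integral_cotKernel_add {w : ℂ} (hw : w.im ≠ 0) :
    ∫ u in (0 : ℝ)..1, cotKernel (u + w) = -(Real.pi * I) * (Real.sign w.im : ℂ) := by
  rcases hw.lt_or_gt with hneg | hpos
  · have hodd (u : ℝ) : cotKernel (u + w) = -cotKernel ((1 - u : ℝ) + -w) := by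
      rw [← cotKernel_neg (ee_ne_one_of_im_ne_zero (by simpa using hw)),
        ← periodic_cotKernel (-_)]
      congr 1
      push_cast
      ring
    simp only [hodd, intervalIntegral.integral_neg]
    rw [intervalIntegral.integral_comp_sub_left (fun u : ℝ => cotKernel (u + -w)), sub_self,
      sub_zero, integral_cotKernel_add_of_im_pos (by simpa using hneg), Real.sign_of_neg hneg]
    push_cast
    ring
  · rw [integral_cotKernel_add_of_im_pos hpos, Real.sign_of_pos hpos, Complex.ofReal_one, mul_one]

end CotangentKernel

section StripIntegrals

variable {f G : ℂ → ℂ} {Y : ℝ}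

lemma isOpen_abs_im_lt (Y : ℝ) : IsOpen {w : ℂ | |w.im| < Y} :=
  isOpen_lt (by fun_prop) continuous_const

lemma integral_add_eq_integral_of_differentiable_strip
    (hd : ∀ w : ℂ, |w.im| < Y → DifferentiableAt ℂ G w) (hper : Function.Periodic G 1)
    {w : ℂ} (hw : |w.im| < Y) :
    ∫ u in (0 : ℝ)..1, G (u + w) = ∫ u in (0 : ℝ)..1, G u := by
  have hrect := Complex.integral_boundary_rect_eq_zero_of_differentiableOn G 0 (1 + w.im * I)
    fun z hz => by
      have hz_im : z.im ∈ Set.uIcc 0 w.im := by simpa using hz.2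
      have hz_abs := Set.abs_sub_left_of_mem_uIcc hz_im
      rw [sub_zero, sub_zero] at hz_abs
      exact (hd z (hz_abs.trans_lt hw)).differentiableWithinAt
  have hsides : ∫ y in (0 : ℝ)..w.im, G (1 + y * I) = ∫ y in (0 : ℝ)..w.im, G (y * I) :=
    intervalIntegral.integral_congr fun y _ => by rw [add_comm, hper]
  simp only [Complex.zero_im, Complex.zero_re, Complex.add_im, Complex.one_im, Complex.mul_im,
    Complex.ofReal_re, Complex.I_im, Complex.ofReal_im, Complex.I_re, mul_one, mul_zero,
    add_zero, zero_add, Complex.add_re, Complex.one_re, Complex.mul_re, sub_self,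
    Complex.ofReal_zero, zero_mul, Complex.ofReal_one, hsides] at hrect
  rw [integral_add_eq_integral_add_im_mul_I hper]
  linear_combination -hrect

variable {ι : Type*} {W : Finset ι} {a ρ : ι → ℂ}

/-- `f` with the polar parts `ρ i / (w - a i - n)`, `n ∈ ℤ`, removed. -/
def regularPart (W : Finset ι) (a ρ : ι → ℂ) (f : ℂ → ℂ) (w : ℂ) : ℂ :=
  f w - ∑ i ∈ W, ρ i * cotKernel (w - a i)

lemma periodic_regularPart (hper : Function.Periodic f 1) :
    Function.Periodic (regularPart W a ρ f) 1 := fun w => by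
  simp only [regularPart, hper w, (periodic_cotKernel.sub_const _) w]

lemma differentiableAt_regularPart {w : ℂ} (hf : DifferentiableAt ℂ f w)
    (hw : ∀ i ∈ W, ee (w - a i) ≠ 1) : DifferentiableAt ℂ (regularPart W a ρ f) w :=
  hf.sub <| DifferentiableAt.fun_sum fun i hi =>
    (differentiableAt_cotKernel_sub (hw i hi)).const_mul _

lemma hasSimpleResidueAt_regularPart {w : ℂ} {i : ι} (hi : i ∈ W) (hw : ee (w - a i) = 1)
    (hf : HasSimpleResidueAt f w (ρ i)) (hinj : ∀ j ∈ W, ee (a j - a i) = 1 → j = i) :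
    HasSimpleResidueAt (regularPart W a ρ f) w 0 := by
  have hterm : ∀ j ∈ W, HasSimpleResidueAt (fun z => ρ j * cotKernel (z - a j)) w
      (ρ j * if j = i then 1 else 0) := fun j hj => by
    refine HasSimpleResidueAt.const_mul _ ?_
    split_ifs with hji
    · exact hji ▸ hasSimpleResidueAt_cotKernel_sub hw
    · refine hasSimpleResidueAt_zero (differentiableAt_cotKernel_sub fun h => ?_).continuousAt
      refine hji (hinj j hj ?_)
      rw [← sub_sub_sub_cancel_left, sub_eq_add_neg (w - a i), ee_add, ee_neg, hw, h, inv_one,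
        one_mul]
  have hsub := hf.sub (HasSimpleResidueAt.fun_sum hterm)
  rwa [show ∑ j ∈ W, ρ j * (if j = i then 1 else 0) = ρ i by simp [hi], sub_self] at hsub

section

variable (hper : Function.Periodic f 1)
  (hdiff : ∀ w : ℂ, |w.im| < Y → (∀ i ∈ W, ee (w - a i) ≠ 1) → DifferentiableAt ℂ f w)
  (hres : ∀ i ∈ W, HasSimpleResidueAt f (a i) (ρ i))
  (hinj : ∀ i ∈ W, ∀ j ∈ W, ee (a i - a j) = 1 → i = j)

include hdiff in
lemma eventually_differentiableAt_regularPart {w : ℂ} (hw : |w.im| < Y) :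
    ∀ᶠ z in 𝓝[≠] w, DifferentiableAt ℂ (regularPart W a ρ f) z := by
  have hne : ∀ᶠ z in 𝓝[≠] w, ∀ i ∈ W, ee (z - a i) ≠ 1 :=
    (Filter.eventually_all_finset W).2 fun i _ => eventually_ee_sub_ne_one (a i) w
  have hstrip : ∀ᶠ z in 𝓝[≠] w, |z.im| < Y :=
    nhdsWithin_le_nhds ((isOpen_abs_im_lt Y).mem_nhds hw)
  filter_upwards [hne, hstrip] with z hz hzY
  exact differentiableAt_regularPart (hdiff z hzY hz) hz

include hper hdiff hres hinj in
lemma differentiableAt_limUnder_regularPart {w : ℂ} (hw : |w.im| < Y) :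
    DifferentiableAt ℂ (fun z => limUnder (𝓝[≠] z) (regularPart W a ρ f)) w := by
  refine HasSimpleResidueAt.differentiableAt_limUnder ?_
    (eventually_differentiableAt_regularPart hdiff hw)
  by_cases hpole : ∀ i ∈ W, ee (w - a i) ≠ 1
  · exact hasSimpleResidueAt_zero
      (differentiableAt_regularPart (hdiff w hw hpole) hpole).continuousAt
  · push Not at hpole
    obtain ⟨i, hi, hwi⟩ := hpole
    exact hasSimpleResidueAt_regularPart hi hwi ((hres i hi).of_ee_sub_eq_one hper hwi)
      fun j hj => hinj j hj i hi

include hper hdiff hres hinj in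
/-- Crossing a pole of residue `ρ` upwards changes the line integral by `-2πiρ`. -/
theorem exists_integral_add_eq_sub_sum_sign :
    ∃ C : ℂ, ∀ w : ℂ, |w.im| < Y → (∀ i ∈ W, w.im ≠ (a i).im) →
      ∫ u in (0 : ℝ)..1, f (u + w) =
        C - Real.pi * I * ∑ i ∈ W, ρ i * (Real.sign (w.im - (a i).im) : ℂ) := by
  set G : ℂ → ℂ := fun z => limUnder (𝓝[≠] z) (regularPart W a ρ f)
  have hG := fun w => differentiableAt_limUnder_regularPart (w := w) hper hdiff hres hinj
  refine ⟨∫ u in (0 : ℝ)..1, G u, fun w hw hwa => ?_⟩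
  have hline (u : ℝ) : |(u + w : ℂ).im| < Y := by simpa using hw
  have hne (u : ℝ) : ∀ i ∈ W, ee (u + w - a i) ≠ 1 := fun i hi =>
    ee_ne_one_of_im_ne_zero (by simpa [sub_eq_zero] using hwa i hi)
  have hdecomp (u : ℝ) : f (u + w) = G (u + w) + ∑ i ∈ W, ρ i * cotKernel (u + w - a i) := by
    have hcont := differentiableAt_regularPart (ρ := ρ) (hdiff _ (hline u) (hne u)) (hne u)
    rw [← sub_eq_iff_eq_add]
    exact ((hcont.continuousAt.tendsto.mono_left nhdsWithin_le_nhds).limUnder_eq).symm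
  have hint_G : IntervalIntegrable (fun u : ℝ => G (u + w)) volume 0 1 :=
    (continuous_iff_continuousAt.2 fun u => (hG _ (hline u)).continuousAt.comp
      (f := fun u : ℝ => (u + w : ℂ)) (by fun_prop)).intervalIntegrable _ _
  have hint_K : ∀ i ∈ W,
      IntervalIntegrable (fun u : ℝ => ρ i * cotKernel (u + w - a i)) volume 0 1 := fun i hi =>
    (continuous_iff_continuousAt.2 fun u => continuousAt_const.mul
      ((differentiableAt_cotKernel (hne u i hi)).continuousAt.comp
        (f := fun u : ℝ => (u + w - a i : ℂ)) (by fun_prop))).intervalIntegrable _ _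
  have hint_sum := IntervalIntegrable.sum W hint_K
  rw [Finset.sum_fn] at hint_sum
  have hK : ∀ i ∈ W, ∫ u in (0 : ℝ)..1, ρ i * cotKernel (u + w - a i) =
      -(Real.pi * I * (ρ i * (Real.sign (w.im - (a i).im) : ℂ))) := fun i hi => by
    simp only [intervalIntegral.integral_const_mul, add_sub_assoc]
    rw [integral_cotKernel_add (by rw [Complex.sub_im]; exact sub_ne_zero.2 (hwa i hi)),
      Complex.sub_im]
    ring
  simp only [hdecomp]
  rw [intervalIntegral.integral_add hint_G hint_sum, intervalIntegral.integral_finsetSum hint_K,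
    integral_add_eq_integral_of_differentiable_strip hG (periodic_limUnder
      (periodic_regularPart hper)) hw, Finset.sum_congr rfl hK, Finset.sum_neg_distrib,
    Finset.mul_sum, ← sub_eq_add_neg]

end

end StripIntegrals

section LineCoefficients

/-- The integrand of the `l`-th Fourier coefficient of `φ` along a horizontal line, as a function of
`w = z + lτ/2m`. In this coordinate the heights `Im w = λ Im τ` of the poles are those
`λ ∈ ℤ + α + l/2m` which index the series `ThStar`. -/
def fourierIntegrand (m : ℕ) (φ : ℂ → ℂ → ℂ) (l : ℤ) (τ w : ℂ) : ℂ :=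
  ee ((l : ℂ) ^ 2 * τ / (4 * (m : ℂ))) *
    (φ τ (w - (l : ℂ) * τ / (2 * (m : ℂ))) * ee (-(l : ℂ) * w))

/-- The Fourier coefficient of `φ` along the line at relative height `x`. -/
def lineCoeff (m : ℕ) (φ : ℂ → ℂ → ℂ) (l : ℤ) (τ : ℂ) (x : ℝ) : ℂ :=
  ∫ u in (0 : ℝ)..1, fourierIntegrand m φ l τ (u + x * τ)

/-- The pole of `fourierIntegrand` at relative height `λ = lamVal m t l n` coming from the pole
`zpt t τ` of `φ`. -/
def fourierPole (m : ℕ) (l : ℤ) (τ : ℂ) (i : (ℚ × ℚ) × ℤ) : ℂ :=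
  (lamVal m i.1 l i.2 : ℝ) * τ + ((i.1.2 : ℚ) : ℂ)

/-- The decrease of `lineCoeff` when its line is moved up across a `fourierPole`: `2πi` times the
residue there. -/
def jumpCoeff (m : ℕ) (D : ℚ × ℚ → ℂ → ℂ) (l : ℤ) (τ : ℂ) (i : (ℚ × ℚ) × ℤ) : ℂ :=
  D i.1 τ * ee ((m : ℂ) * (i.1.1 : ℚ) * (i.1.2 : ℚ)) *
    ee (-(2 * (m : ℂ) * (i.1.2 : ℚ) * (lamVal m i.1 l i.2 : ℝ))) *
    ee (-(m : ℂ) * (lamVal m i.1 l i.2 : ℝ) ^ 2 * τ)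

/-- The signed indicator function of the `x` for which `a` lies between `0` and `x`. -/
def crossing (a x : ℝ) : ℝ := (Real.sign (x - a) + Real.sign a) / 2

lemma fourierIntegrand_zero (m : ℕ) (φ : ℂ → ℂ → ℂ) (τ : ℂ) : fourierIntegrand m φ 0 τ = φ τ := by
  funext w
  simp [fourierIntegrand, ee_zero]

lemma periodic_fourierIntegrand {m : ℕ} {φ : ℂ → ℂ → ℂ} (he : EllipticLaw m φ) (l : ℤ) {τ : ℂ}
    (hτ : 0 < τ.im) : Function.Periodic (fourierIntegrand m φ l τ) 1 := fun w => by
  have hφ := he τ hτ (w - (l : ℂ) * τ / (2 * (m : ℂ))) 0 1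
  simp only [Int.cast_zero, Int.cast_one, zero_mul, add_zero, mul_zero, ne_eq, OfNat.ofNat_ne_zero,
    not_false_eq_true, zero_pow, ee_zero, one_mul] at hφ
  have hee : ee (-(l : ℂ) * (w + 1)) = ee (-(l : ℂ) * w) :=
    ee_eq_ee_of_sub_eq_intCast (-l) (by push_cast; ring)
  rw [fourierIntegrand, fourierIntegrand, hee, add_sub_right_comm, hφ]

lemma fourierPole_eq (m : ℕ) (l : ℤ) (τ : ℂ) (i : (ℚ × ℚ) × ℤ) :
    fourierPole m l τ i = zpt i.1 τ + ((i.2 : ℂ) * τ + (l : ℂ) * τ / (2 * (m : ℂ))) := by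
  simp only [fourierPole, zpt, lamVal]
  push_cast
  ring

lemma im_fourierPole (m : ℕ) (l : ℤ) (τ : ℂ) (i : (ℚ × ℚ) × ℤ) :
    (fourierPole m l τ i).im = lamVal m i.1 l i.2 * τ.im := by
  rw [fourierPole, Complex.add_im, Complex.im_ofReal_mul, Complex.ratCast_im, add_zero]

lemma sign_mul_of_pos (a : ℝ) {b : ℝ} (hb : 0 < b) : Real.sign (a * b) = Real.sign a := by
  rcases lt_trichotomy a 0 with ha | rfl | ha
  · rw [Real.sign_of_neg ha, Real.sign_of_neg (mul_neg_of_neg_of_pos ha hb)]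
  · rw [zero_mul]
  · rw [Real.sign_of_pos ha, Real.sign_of_pos (mul_pos ha hb)]

lemma crossing_eq_zero {a x : ℝ} (h : |x| < |a|) : crossing a x = 0 := by
  obtain ⟨hlo, hhi⟩ := abs_lt.1 h
  rcases lt_trichotomy a 0 with ha | rfl | ha
  · rw [abs_of_neg ha] at hlo hhi
    rw [crossing, Real.sign_of_pos (by linarith), Real.sign_of_neg ha]
    norm_num
  · rw [abs_zero] at h
    exact absurd h (abs_nonneg x).not_gt
  · rw [abs_of_pos ha] at hlo hhi
    rw [crossing, Real.sign_of_neg (by linarith), Real.sign_of_pos ha]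
    norm_num

lemma eventually_sign_sub_add_sign_neg_sub (a : ℝ) : ∀ᶠ ε : ℝ in 𝓝[>] 0,
    ε ≠ a ∧ -ε ≠ a ∧ Real.sign (ε - a) + Real.sign (-ε - a) = -2 * Real.sign a := by
  rcases lt_trichotomy a 0 with ha | rfl | ha
  · filter_upwards [Ioo_mem_nhdsGT (neg_pos.2 ha)] with ε ⟨hε, hεa⟩
    refine ⟨by linarith, by linarith, ?_⟩
    rw [Real.sign_of_pos (by linarith), Real.sign_of_pos (by linarith), Real.sign_of_neg ha]
    norm_num
  · filter_upwards [self_mem_nhdsWithin] with ε hε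
    rw [Set.mem_Ioi] at hε
    refine ⟨hε.ne', by linarith, ?_⟩
    rw [Real.sign_of_pos (by linarith), Real.sign_of_neg (by linarith), Real.sign_zero]
    norm_num
  · filter_upwards [Ioo_mem_nhdsGT ha] with ε ⟨hε, hεa⟩
    refine ⟨by linarith, by linarith, ?_⟩
    rw [Real.sign_of_neg (by linarith), Real.sign_of_neg (by linarith), Real.sign_of_pos ha]
    norm_num

lemma eq_of_add_intCast_eq {S : Set (ℚ × ℚ)} {T : Finset (ℚ × ℚ)} (hT : IsRepSet S T)
    {t t' : ℚ × ℚ} (ht : t ∈ T) (ht' : t' ∈ T) (a b : ℤ) (h₁ : t.1 = t'.1 + a)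
    (h₂ : t.2 = t'.2 + b) : t = t' :=
  (hT.2 t (hT.1 ht)).unique ⟨ht, 0, 0, by simp⟩ ⟨ht', a, b, h₁, h₂⟩

lemma exists_forall_notMem_Icc_le_abs_lamVal (m : ℕ) (T : Finset (ℚ × ℚ)) (l : ℤ) (X : ℝ) :
    ∃ M : ℕ, ∀ t ∈ T, ∀ n : ℤ, n ∉ Finset.Icc (-(M : ℤ)) M → X ≤ |lamVal m t l n| := by
  obtain ⟨M, hM⟩ := exists_nat_ge (X + |(l : ℝ) / (2 * m)| + ∑ t ∈ T, |(t.1 : ℝ)|)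
  refine ⟨M, fun t ht n hn => ?_⟩
  have hα : |(t.1 : ℝ)| ≤ ∑ t ∈ T, |(t.1 : ℝ)| :=
    Finset.single_le_sum (f := fun t : ℚ × ℚ => |(t.1 : ℝ)|) (fun _ _ => abs_nonneg _) ht
  have hMn : (M : ℝ) ≤ |(n : ℝ)| := by
    rw [Finset.mem_Icc, ← abs_le, not_le] at hn
    exact_mod_cast hn.le
  have htri : |(n : ℝ)| ≤ |lamVal m t l n| + (|(t.1 : ℝ)| + |(l : ℝ) / (2 * m)|) :=
    calc |(n : ℝ)| = |lamVal m t l n - (t.1 + l / (2 * m))| := by rw [lamVal]; ring_nf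
      _ ≤ |lamVal m t l n| + |(t.1 : ℝ) + l / (2 * m)| := abs_sub _ _
      _ ≤ _ := by gcongr; exact abs_add_le _ _
  linarith

variable {k : ℤ} {m : ℕ} {S : Set (ℚ × ℚ)} {T : Finset (ℚ × ℚ)}

lemma hasSimpleResidueAt_fourierIntegrand [NeZero m] {φ : ℂ → ℂ → ℂ} (he : EllipticLaw m φ)
    {D : ℚ × ℚ → ℂ → ℂ} (hD : IsResidueFactor m S φ D) (l : ℤ) {τ : ℂ} (hτ : 0 < τ.im)
    {i : (ℚ × ℚ) × ℤ} (hi : i.1 ∈ S) :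
    HasSimpleResidueAt (fourierIntegrand m φ l τ) (fourierPole m l τ i)
      (jumpCoeff m D l τ i / (2 * Real.pi * I)) := by
  obtain ⟨t, n⟩ := i
  have hm : (m : ℂ) ≠ 0 := NeZero.ne _
  set p : ℂ := (n : ℂ) * τ + (l : ℂ) * τ / (2 * (m : ℂ)) with hp
  set e : ℂ → ℂ := fun z => (l : ℂ) ^ 2 * τ / (4 * (m : ℂ)) +
    (-(m : ℂ) * ((n : ℂ) ^ 2 * τ + 2 * (n : ℂ) * z) + -(l : ℂ) * (z + p)) with he'
  have hshift (z : ℂ) : fourierIntegrand m φ l τ (z + p) = ee (e z) * φ τ z := by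
    have hz : z + p - (l : ℂ) * τ / (2 * (m : ℂ)) = z + (n : ℂ) * τ + ((0 : ℤ) : ℂ) := by
      rw [hp]; push_cast; ring
    rw [fourierIntegrand, hz, he τ hτ z n 0, ee_add, ee_add]
    ring
  have hφ : HasSimpleResidueAt (φ τ) (zpt t τ)
      ((2 * Real.pi * I * ee ((m : ℂ) * (t.1 : ℚ) * zpt t τ))⁻¹ * D t τ) :=
    (Tendsto.const_mul _ (hD t hi τ hτ)).congr fun z =>
      inv_mul_cancel_left₀ (mul_ne_zero two_pi_I_ne_zero (ee_ne_zero _)) _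
  have hcont : Continuous fun z => ee (e z) := continuous_ee.comp (by fun_prop)
  have hmain := (hφ.mul_left hcont.continuousAt).comp_sub_const p
  simp only [← hshift, sub_add_cancel] at hmain
  convert hmain using 1
  · rw [fourierPole_eq]
  · have hexp : ee ((m : ℂ) * (t.1 : ℚ) * (t.2 : ℚ)) *
        ee (-(2 * (m : ℂ) * (t.2 : ℚ) * (lamVal m t l n : ℝ))) *
        ee (-(m : ℂ) * (lamVal m t l n : ℝ) ^ 2 * τ) =
        ee (e (zpt t τ)) * ee (-((m : ℂ) * (t.1 : ℚ) * zpt t τ)) := by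
      simp only [← ee_add]
      congr 1
      simp only [zpt, lamVal, he', hp]
      push_cast
      field_simp
      ring
    rw [mul_inv, ← ee_neg, jumpCoeff, mul_assoc, mul_assoc, ← mul_assoc (ee _) (ee _), hexp]
    ring

lemma eq_of_ee_fourierPole_sub_eq_one (hT : IsRepSet S T) (l : ℤ) {τ : ℂ} (hτ : 0 < τ.im)
    {i j : (ℚ × ℚ) × ℤ} (hi : i.1 ∈ T) (hj : j.1 ∈ T)
    (h : ee (fourierPole m l τ i - fourierPole m l τ j) = 1) : i = j := by
  obtain ⟨b, hb⟩ := ee_eq_one_iff.1 h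
  have hlam : lamVal m i.1 l i.2 = lamVal m j.1 l j.2 := by
    have him := congrArg Complex.im hb
    rw [Complex.sub_im, im_fourierPole, im_fourierPole, Complex.intCast_im, sub_eq_zero] at him
    exact mul_right_cancel₀ hτ.ne' him
  have hβ : i.1.2 = j.1.2 + b := by
    rw [fourierPole, fourierPole, hlam, add_sub_add_left_eq_sub, sub_eq_iff_eq_add'] at hb
    exact_mod_cast hb
  rw [lamVal, lamVal, add_left_inj] at hlam
  have hα : i.1.1 = j.1.1 + ((j.2 - i.2 : ℤ) : ℚ) := by
    have : ((i.1.1 : ℚ) : ℝ) = (j.1.1 : ℚ) + ((j.2 - i.2 : ℤ) : ℝ) := by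
      push_cast
      linarith
    exact_mod_cast this
  have hij : i.1 = j.1 := eq_of_add_intCast_eq hT hi hj _ _ hα hβ
  rw [hij, add_left_inj] at hlam
  exact Prod.ext hij (mod_cast hlam)

lemma differentiableAt_fourierIntegrand (Φ : MeroJacobiForm k m S) (hT : IsRepSet S T) (l : ℤ)
    {τ : ℂ} (hτ : 0 < τ.im) {w : ℂ}
    (hw : ∀ i : (ℚ × ℚ) × ℤ, i.1 ∈ T → (fourierPole m l τ i).im = w.im →
      ee (w - fourierPole m l τ i) ≠ 1) :
    DifferentiableAt ℂ (fourierIntegrand m Φ.toFun l τ) w := by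
  have hφ : DifferentiableAt ℂ (fun p : ℂ × ℂ => Φ.toFun p.1 p.2)
      (τ, w - (l : ℂ) * τ / (2 * (m : ℂ))) := by
    refine Φ.holo τ hτ _ fun s hs hz => ?_
    obtain ⟨t, ⟨ht, a, b, ha, hb⟩, -⟩ := hT.2 s hs
    have hwt : w = fourierPole m l τ (t, a) + b := by
      rw [fourierPole_eq, zpt]
      rw [zpt, ha, hb] at hz
      push_cast at hz
      linear_combination hz
    refine hw (t, a) ht ?_ ?_
    · rw [hwt, Complex.add_im, Complex.intCast_im, add_zero]
    · rw [hwt, add_sub_cancel_left, ee_intCast]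
  have hφ' : DifferentiableAt ℂ (fun w : ℂ => Φ.toFun τ (w - (l : ℂ) * τ / (2 * (m : ℂ)))) w :=
    DifferentiableAt.comp (g := fun p : ℂ × ℂ => Φ.toFun p.1 p.2) w hφ
      (f := fun w => (τ, w - (l : ℂ) * τ / (2 * (m : ℂ)))) (by fun_prop)
  have := differentiable_ee
  exact (hφ'.mul (by fun_prop)).const_mul _

lemma exists_integral_fourierIntegrand_add [NeZero m] (Φ : MeroJacobiForm k m S)
    {D : ℚ × ℚ → ℂ → ℂ} (hD : IsResidueFactor m S Φ.toFun D) (hT : IsRepSet S T) (l : ℤ) {τ : ℂ}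
    (hτ : 0 < τ.im) {X : ℝ} {M : ℕ}
    (hM : ∀ t ∈ T, ∀ n : ℤ, n ∉ Finset.Icc (-(M : ℤ)) M → X ≤ |lamVal m t l n|) :
    ∃ C : ℂ, ∀ w : ℂ, |w.im| < X * τ.im →
      (∀ i ∈ T ×ˢ Finset.Icc (-(M : ℤ)) M, w.im ≠ (fourierPole m l τ i).im) →
      ∫ u in (0 : ℝ)..1, fourierIntegrand m Φ.toFun l τ (u + w) =
        C - 1 / 2 * ∑ i ∈ T ×ˢ Finset.Icc (-(M : ℤ)) M,
          jumpCoeff m D l τ i * (Real.sign (w.im - (fourierPole m l τ i).im) : ℂ) := by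
  have hmem {i : (ℚ × ℚ) × ℤ} (hi : i ∈ T ×ˢ Finset.Icc (-(M : ℤ)) M) : i.1 ∈ T :=
    (Finset.mem_product.1 hi).1
  obtain ⟨C, hC⟩ := exists_integral_add_eq_sub_sum_sign
    (W := T ×ˢ Finset.Icc (-(M : ℤ)) M) (Y := X * τ.im)
    (periodic_fourierIntegrand Φ.elliptic l hτ)
    (fun w hw hne => differentiableAt_fourierIntegrand Φ hT l hτ fun i hi him => hne i <| by
      refine Finset.mem_product.2 ⟨hi, ?_⟩
      by_contra hn
      rw [← him, im_fourierPole, abs_mul, abs_of_pos hτ] at hw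
      exact (lt_of_mul_lt_mul_right hw hτ.le).not_ge (hM i.1 hi i.2 hn))
    (fun i hi => hasSimpleResidueAt_fourierIntegrand Φ.elliptic hD l hτ (hT.1 (hmem hi)))
    (fun i hi j hj => eq_of_ee_fourierPole_sub_eq_one hT l hτ (hmem hi) (hmem hj))
  refine ⟨C, fun w hw hne => (hC w hw hne).trans ?_⟩
  rw [Finset.mul_sum, Finset.mul_sum]
  congr 1
  refine Finset.sum_congr rfl fun i _ => ?_
  have hpi : (Real.pi : ℂ) ≠ 0 := mod_cast Real.pi_ne_zero
  field_simp [I_ne_zero]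

lemma eq_of_isCanonCoeff {φ : ℂ → ℂ → ℂ} {h : ℤ → ℂ → ℂ} (hh : IsCanonCoeff m φ h) {l : ℤ}
    {τ : ℂ} (hτ : 0 < τ.im) {c : ℂ}
    (hc : ∀ᶠ ε : ℝ in 𝓝[>] 0, ((∫ u in (0 : ℝ)..1, fourierIntegrand m φ l τ (u + ε * I)) +
      ∫ u in (0 : ℝ)..1, fourierIntegrand m φ l τ (u - ε * I)) = 2 * c) : h l τ = c := by
  have hlim := (hh l τ hτ).const_mul (ee ((l : ℂ) ^ 2 * τ / (4 * (m : ℂ))))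
  rw [← mul_assoc, ← ee_add, show (l : ℂ) ^ 2 * τ / (4 * (m : ℂ)) + -(l : ℂ) ^ 2 * τ / (4 * (m : ℂ))
    = 0 by ring, ee_zero, one_mul] at hlim
  refine tendsto_nhds_unique hlim (tendsto_const_nhds.congr' ?_)
  filter_upwards [hc] with ε hε
  simp only [fourierIntegrand, intervalIntegral.integral_const_mul] at hε
  linear_combination -(1 / 2 : ℂ) * hε

lemma canonCoeff_eq [NeZero m] {φ : ℂ → ℂ → ℂ} {h : ℤ → ℂ → ℂ} (hh : IsCanonCoeff m φ h) {l : ℤ}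
    {τ : ℂ} (hτ : 0 < τ.im) {Y : ℝ} (hY : 0 < Y) {ι : Type*} {W : Finset ι} {a : ι → ℝ} {J : ι → ℂ}
    {C : ℂ} (hC : ∀ w : ℂ, |w.im| < Y → (∀ i ∈ W, w.im ≠ a i) →
      ∫ u in (0 : ℝ)..1, fourierIntegrand m φ l τ (u + w) =
        C - 1 / 2 * ∑ i ∈ W, J i * (Real.sign (w.im - a i) : ℂ)) :
    h l τ = C + 1 / 2 * ∑ i ∈ W, J i * (Real.sign (a i) : ℂ) := by
  refine eq_of_isCanonCoeff hh hτ ?_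
  filter_upwards [Ioo_mem_nhdsGT hY,
    (Filter.eventually_all_finset W).2 fun i _ => eventually_sign_sub_add_sign_neg_sub (a i)]
    with ε ⟨hε, hεY⟩ hW
  have him : (ε * I : ℂ).im = ε := by rw [Complex.im_ofReal_mul, I_im, mul_one]
  have him' : (-(ε * I) : ℂ).im = -ε := by rw [Complex.neg_im, him]
  have habove := hC (ε * I) (by rwa [him, abs_of_pos hε]) fun i hi => him.trans_ne (hW i hi).1
  have hbelow := hC (-(ε * I)) (by rwa [him', abs_neg, abs_of_pos hε])
    fun i hi => him'.trans_ne (hW i hi).2.1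
  have hsum : ∑ i ∈ W, J i * (Real.sign (ε - a i) : ℂ) + ∑ i ∈ W, J i * (Real.sign (-ε - a i) : ℂ)
      = -2 * ∑ i ∈ W, J i * (Real.sign (a i) : ℂ) := by
    rw [← Finset.sum_add_distrib, Finset.mul_sum]
    refine Finset.sum_congr rfl fun i hi => ?_
    have hsign : (Real.sign (ε - a i) : ℂ) + (Real.sign (-ε - a i) : ℂ) =
      -2 * (Real.sign (a i) : ℂ) := mod_cast (hW i hi).2.2
    linear_combination J i * hsign
  simp only [him, him', ← sub_eq_add_neg] at habove hbelow
  rw [habove, hbelow]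
  linear_combination -(1 / 2 : ℂ) * hsum

lemma lineCoeff_eq [NeZero m] (Φ : MeroJacobiForm k m S) {h : ℤ → ℂ → ℂ}
    (hh : IsCanonCoeff m Φ.toFun h) {D : ℚ × ℚ → ℂ → ℂ} (hD : IsResidueFactor m S Φ.toFun D)
    (hT : IsRepSet S T) (l : ℤ) {τ : ℂ} (hτ : 0 < τ.im) {x : ℝ}
    (hx : ∀ t ∈ T, ∀ n : ℤ, x ≠ lamVal m t l n) :
    lineCoeff m Φ.toFun l τ x =
      h l τ - ∑ t ∈ T, ∑' n : ℤ, jumpCoeff m D l τ (t, n) * (crossing (lamVal m t l n) x : ℂ) := by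
  obtain ⟨M, hM⟩ := exists_forall_notMem_Icc_le_abs_lamVal m T l (|x| + 1)
  obtain ⟨C, hC⟩ := exists_integral_fourierIntegrand_add Φ hD hT l hτ hM
  have hxτ : (x * τ : ℂ).im = x * τ.im := Complex.im_ofReal_mul x τ
  have hline := hC (x * τ) (by
    rw [hxτ, abs_mul, abs_of_pos hτ]
    exact mul_lt_mul_of_pos_right (lt_add_one _) hτ) fun i hi hi' => by
      rw [hxτ, im_fourierPole] at hi'
      exact hx i.1 (Finset.mem_product.1 hi).1 i.2 (mul_right_cancel₀ hτ.ne' hi')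
  have htsum : ∑ t ∈ T, ∑' n : ℤ, jumpCoeff m D l τ (t, n) * (crossing (lamVal m t l n) x : ℂ) =
      ∑ i ∈ T ×ˢ Finset.Icc (-(M : ℤ)) M,
        jumpCoeff m D l τ i * (crossing (lamVal m i.1 l i.2) x : ℂ) := by
    rw [Finset.sum_product]
    refine Finset.sum_congr rfl fun t ht => tsum_eq_sum fun n hn => ?_
    rw [crossing_eq_zero ((lt_add_one _).trans_le (hM t ht n hn)), Complex.ofReal_zero, mul_zero]
  rw [lineCoeff, hline, canonCoeff_eq hh hτ (by positivity) hC, htsum, add_sub_assoc,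
    sub_eq_add_neg]
  congr 1
  rw [Finset.mul_sum, Finset.mul_sum, ← Finset.sum_sub_distrib, ← Finset.sum_neg_distrib]
  refine Finset.sum_congr rfl fun i _ => ?_
  rw [hxτ, im_fourierPole, ← sub_mul, sign_mul_of_pos _ hτ, sign_mul_of_pos _ hτ, crossing]
  push_cast
  ring

end LineCoefficients

section DominatedSeries

variable {α ι E : Type*} [Countable ι] [MeasurableSpace α] {μ : Measure α} [NormedAddCommGroup E]
  {F : ι → α → E} {c : ι → ℝ} {g : α → ℝ}

lemma integrable_tsum_of_norm_le_mul [CompleteSpace E] (hF : ∀ i, AEStronglyMeasurable (F i) μ)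
    (hc : Summable c) (hg : Integrable g μ) (hb : ∀ i x, ‖F i x‖ ≤ c i * g x) :
    Integrable (fun x => ∑' i, F i x) μ := by
  refine (hg.const_mul (∑' i, c i)).mono' ?_ (ae_of_all _ fun x => ?_)
  · exact aestronglyMeasurable_of_tendsto_ae (u := (atTop : Filter (Finset ι)))
      (f := fun s x => ∑ i ∈ s, F i x)
      (fun s => Finset.aestronglyMeasurable_fun_sum s fun i _ => hF i)
      (ae_of_all _ fun x => (Summable.of_norm_bounded (hc.mul_right (g x)) fun i => hb i x).hasSum)
  · rw [← tsum_mul_right]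
    exact tsum_of_norm_bounded (hc.mul_right (g x)).hasSum fun i => hb i x

lemma hasSum_integral_of_norm_le_mul [NormedSpace ℝ E] (hF : ∀ i, AEStronglyMeasurable (F i) μ)
    (hc : Summable c) (hg : Integrable g μ) (hb : ∀ i x, ‖F i x‖ ≤ c i * g x) :
    HasSum (fun i => ∫ x, F i x ∂μ) (∫ x, ∑' i, F i x ∂μ) := by
  have hF_int (i : ι) : Integrable (F i) μ :=
    (hg.const_mul (c i)).mono' (hF i) (ae_of_all _ (hb i))
  refine hasSum_integral_of_summable_integral_norm hF_int ?_
  refine (hc.mul_right (∫ x, g x ∂μ)).of_nonneg_of_le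
    (fun i => integral_nonneg fun x => norm_nonneg _) fun i => ?_
  rw [← integral_const_mul]
  exact integral_mono (hF_int i).norm (hg.const_mul _) (hb i)

end DominatedSeries

section GaussianIntegrals

lemma measurable_real_sign : Measurable Real.sign :=
  Measurable.ite measurableSet_Iio measurable_const
    (Measurable.ite measurableSet_Ioi measurable_const measurable_const)

lemma abs_real_sign_le_one (r : ℝ) : |Real.sign r| ≤ 1 := by
  rcases Real.sign_apply_eq r with h | h | h <;> rw [h] <;> norm_num

lemma measurable_crossing (a : ℝ) : Measurable (crossing a) :=
  ((measurable_real_sign.comp (measurable_id.sub_const a)).add_const _).div_const 2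

lemma abs_crossing_le_one (a x : ℝ) : |crossing a x| ≤ 1 := by
  have htri := abs_add_le (Real.sign (x - a)) (Real.sign a)
  have hx := abs_real_sign_le_one (x - a)
  have ha := abs_real_sign_le_one a
  rw [crossing, abs_div, abs_two]
  linarith

lemma crossing_neg_right (a x : ℝ) : crossing a (-x) = -crossing (-a) x := by
  rw [crossing, crossing, show -x - a = -(x - -a) by ring, Real.sign_neg, Real.sign_neg]
  ring

lemma crossing_ae_eq_indicator {a : ℝ} (ha : 0 < a) :
    crossing a =ᵐ[volume] Set.indicator (Set.Ioi a) 1 := by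
  filter_upwards [compl_mem_ae_iff.2 (measure_singleton a)] with x hx
  rw [crossing, Real.sign_of_pos ha]
  rcases lt_or_gt_of_ne hx with hxa | hxa
  · rw [Set.indicator_of_notMem (Set.notMem_Ioi.2 hxa.le), Real.sign_of_neg (sub_neg.2 hxa),
      neg_add_cancel, zero_div]
  · rw [Set.indicator_of_mem (Set.mem_Ioi.2 hxa), Real.sign_of_pos (sub_pos.2 hxa),
      add_self_div_two, Pi.one_apply]

lemma integral_exp_neg_mul_sq_Ioi {b : ℝ} (hb : 0 < b) (a : ℝ) :
    ∫ x in Set.Ioi a, Real.exp (-b * x ^ 2) = √(Real.pi / b) * (erfc (a * √b) / 2) := by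
  have hsb : 0 < √b := Real.sqrt_pos.2 hb
  have : 0 < √Real.pi := Real.sqrt_pos.2 Real.pi_pos
  have hsubst := integral_comp_mul_left_Ioi (fun t => Real.exp (-t ^ 2)) a hsb
  simp only [mul_pow, Real.sq_sqrt hb.le, ← neg_mul] at hsubst
  rw [hsubst, erfc, Real.sqrt_div Real.pi_pos.le, mul_comm a, smul_eq_mul]
  field_simp

lemma integral_exp_neg_mul_sq_mul_crossing_of_pos {b a : ℝ} (hb : 0 < b) (ha : 0 < a) :
    ∫ x, Real.exp (-b * x ^ 2) * crossing a x = √(Real.pi / b) * (erfc (a * √b) / 2) := by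
  rw [← integral_exp_neg_mul_sq_Ioi hb, ← integral_indicator measurableSet_Ioi]
  refine integral_congr_ae ((crossing_ae_eq_indicator ha).mono fun x hx => ?_)
  simp only [hx, Set.indicator_apply, Pi.one_apply, mul_ite, mul_one, mul_zero]

lemma integral_exp_neg_mul_sq_mul_crossing {b : ℝ} (hb : 0 < b) (a : ℝ) :
    ∫ x, Real.exp (-b * x ^ 2) * crossing a x =
      √(Real.pi / b) * (Real.sign a / 2 * erfc (|a| * √b)) := by
  have hneg (a : ℝ) : ∫ x, Real.exp (-b * x ^ 2) * crossing a x =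
      -∫ x, Real.exp (-b * x ^ 2) * crossing (-a) x := by
    rw [← integral_neg_eq_self, ← integral_neg]
    simp only [crossing_neg_right, neg_sq, mul_neg]
  rcases lt_trichotomy a 0 with ha | rfl | ha
  · rw [hneg, integral_exp_neg_mul_sq_mul_crossing_of_pos hb (neg_pos.2 ha), Real.sign_of_neg ha,
      abs_of_neg ha]
    ring
  · have hself := hneg 0
    rw [neg_zero, self_eq_neg] at hself
    rw [hself, Real.sign_zero, zero_div, zero_mul, mul_zero]
  · rw [integral_exp_neg_mul_sq_mul_crossing_of_pos hb ha, Real.sign_of_pos ha, abs_of_pos ha]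
    ring

lemma abs_exp_neg_mul_sq_mul_crossing_le {b : ℝ} (hb : 0 < b) (a x : ℝ) :
    |Real.exp (-b * x ^ 2) * crossing a x| ≤
      Real.exp (-(3 / 4 * b * a ^ 2)) * Real.exp (-(b / 4) * x ^ 2) := by
  rcases lt_or_ge |x| |a| with h | h
  · rw [crossing_eq_zero h, mul_zero, abs_zero]
    positivity
  · have hsq : a ^ 2 ≤ x ^ 2 := sq_le_sq.2 h
    rw [abs_mul, Real.abs_exp, ← Real.exp_add]
    calc Real.exp (-b * x ^ 2) * |crossing a x| ≤ Real.exp (-b * x ^ 2) * 1 := by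
          gcongr; exact abs_crossing_le_one a x
      _ ≤ Real.exp (-(3 / 4 * b * a ^ 2) + -(b / 4) * x ^ 2) := by
          rw [mul_one, Real.exp_le_exp]
          nlinarith

lemma summable_exp_neg_mul_int_add_sq {b : ℝ} (hb : 0 < b) (d : ℝ) :
    Summable fun n : ℤ => Real.exp (-(b * (n + d) ^ 2)) := by
  refine (HurwitzZeta.hasSum_int_evenKernel d (div_pos hb Real.pi_pos)).summable.congr fun n => ?_
  congr 1
  field_simp

end GaussianIntegrals

section GaussianLineCoefficients

/-- The decay rate of the Gaussian factor `e^{-4πmτ₂p²}` in the invariant measure of the Petersson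
pairing of index-`m` Jacobi forms at `z = pτ + u`. -/
def gaussRate (m : ℕ) (τ : ℂ) : ℝ := 4 * Real.pi * m * τ.im

/-- `lineCoeff` weighted by the Gaussian of rate `gaussRate m τ`. -/
def gaussLineCoeff (m : ℕ) (φ : ℂ → ℂ → ℂ) (l : ℤ) (τ : ℂ) (x : ℝ) : ℂ :=
  (Real.exp (-(gaussRate m τ) * x ^ 2) : ℂ) * lineCoeff m φ l τ x

/-- The contribution of one pole to `gaussLineCoeff`. -/
def gaussJump (m : ℕ) (D : ℚ × ℚ → ℂ → ℂ) (l : ℤ) (τ : ℂ) (i : (ℚ × ℚ) × ℤ) (x : ℝ) : ℂ :=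
  jumpCoeff m D l τ i *
    ((Real.exp (-(gaussRate m τ) * x ^ 2) * crossing (lamVal m i.1 l i.2) x : ℝ) : ℂ)

variable {k : ℤ} {m : ℕ} {S : Set (ℚ × ℚ)} {T : Finset (ℚ × ℚ)} {D : ℚ × ℚ → ℂ → ℂ} {τ : ℂ}

lemma gaussRate_pos [NeZero m] (hτ : 0 < τ.im) : 0 < gaussRate m τ := by
  have hm : (0 : ℝ) < m := mod_cast Nat.pos_of_neZero m
  have := Real.pi_pos
  rw [gaussRate]
  positivity

lemma sqrt_gaussRate (m : ℕ) (τ : ℂ) : √(gaussRate m τ) = 2 * √(Real.pi * m * τ.im) := by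
  rw [gaussRate, show 4 * Real.pi * m * τ.im = (2 : ℝ) ^ 2 * (Real.pi * m * τ.im) by ring,
    Real.sqrt_mul (by norm_num), Real.sqrt_sq (by norm_num)]

lemma norm_jumpCoeff (m : ℕ) (D : ℚ × ℚ → ℂ → ℂ) (l : ℤ) (τ : ℂ) (i : (ℚ × ℚ) × ℤ) :
    ‖jumpCoeff m D l τ i‖ =
      ‖D i.1 τ‖ * Real.exp (gaussRate m τ / 2 * lamVal m i.1 l i.2 ^ 2) := by
  have hunit (x : ℝ) : ‖ee x‖ = 1 := by
    rw [norm_ee, Complex.ofReal_im, mul_zero, neg_zero, Real.exp_zero]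
  have hαβ := hunit (m * i.1.1 * i.1.2)
  have hβ := hunit (-(2 * m * i.1.2 * lamVal m i.1 l i.2))
  have him : (-(m : ℂ) * (lamVal m i.1 l i.2 : ℝ) ^ 2 * τ).im =
      -(m * lamVal m i.1 l i.2 ^ 2 * τ.im) := by
    rw [show -(m : ℂ) * (lamVal m i.1 l i.2 : ℝ) ^ 2 * τ =
      ((-(m * lamVal m i.1 l i.2 ^ 2) : ℝ) : ℂ) * τ by push_cast; ring, Complex.im_ofReal_mul,
      neg_mul]
  push_cast at hαβ hβ
  rw [jumpCoeff, norm_mul, norm_mul, norm_mul, hαβ, hβ, norm_ee, him, mul_one, mul_one, gaussRate]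
  ring_nf

lemma norm_gaussJump_le [NeZero m] (D : ℚ × ℚ → ℂ → ℂ) (l : ℤ) (hτ : 0 < τ.im) (t : ℚ × ℚ) (n : ℤ)
    (x : ℝ) : ‖gaussJump m D l τ (t, n) x‖ ≤
      ‖D t τ‖ * Real.exp (-(gaussRate m τ / 4 * (n + (t.1 + l / (2 * m))) ^ 2)) *
        Real.exp (-(gaussRate m τ / 4) * x ^ 2) := by
  rw [← add_assoc, ← lamVal, gaussJump, norm_mul, norm_jumpCoeff, Complex.norm_real]
  calc _ ≤ ‖D t τ‖ * Real.exp (gaussRate m τ / 2 * lamVal m t l n ^ 2) *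
        (Real.exp (-(3 / 4 * gaussRate m τ * lamVal m t l n ^ 2)) *
          Real.exp (-(gaussRate m τ / 4) * x ^ 2)) := by
        gcongr
        exact abs_exp_neg_mul_sq_mul_crossing_le (gaussRate_pos hτ) _ _
    _ = _ := by
        rw [mul_assoc, ← mul_assoc (Real.exp _), ← Real.exp_add, ← mul_assoc]
        ring_nf

lemma summable_norm_gaussJump_bound [NeZero m] (D : ℚ × ℚ → ℂ → ℂ) (l : ℤ) (hτ : 0 < τ.im)
    (t : ℚ × ℚ) : Summable fun n : ℤ =>
      ‖D t τ‖ * Real.exp (-(gaussRate m τ / 4 * (n + (t.1 + l / (2 * m))) ^ 2)) :=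
  (summable_exp_neg_mul_int_add_sq (by have := gaussRate_pos (m := m) hτ; positivity) _).mul_left _

lemma measurable_gaussJump (m : ℕ) (D : ℚ × ℚ → ℂ → ℂ) (l : ℤ) (τ : ℂ) (i : (ℚ × ℚ) × ℤ) :
    Measurable (gaussJump m D l τ i) := by
  have hcross := measurable_crossing (lamVal m i.1 l i.2)
  unfold gaussJump
  fun_prop

lemma integrable_tsum_gaussJump [NeZero m] (D : ℚ × ℚ → ℂ → ℂ) (l : ℤ) (hτ : 0 < τ.im)
    (t : ℚ × ℚ) : Integrable fun x => ∑' n : ℤ, gaussJump m D l τ (t, n) x :=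
  integrable_tsum_of_norm_le_mul (fun _ => (measurable_gaussJump ..).aestronglyMeasurable)
    (summable_norm_gaussJump_bound D l hτ t)
    (integrable_exp_neg_mul_sq (by have := gaussRate_pos (m := m) hτ; positivity))
    (norm_gaussJump_le D l hτ t)

lemma integral_tsum_gaussJump [NeZero m] (D : ℚ × ℚ → ℂ → ℂ) (l : ℤ) (hτ : 0 < τ.im)
    (t : ℚ × ℚ) : ∫ x, ∑' n : ℤ, gaussJump m D l τ (t, n) x =
      (√(Real.pi / gaussRate m τ) : ℂ) * (D t τ * ThStar m t l τ) := by
  have hsum := hasSum_integral_of_norm_le_mul (μ := volume) (F := fun n => gaussJump m D l τ (t, n))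
    (fun _ => (measurable_gaussJump ..).aestronglyMeasurable)
    (summable_norm_gaussJump_bound D l hτ t)
    (integrable_exp_neg_mul_sq (by have := gaussRate_pos (m := m) hτ; positivity))
    (norm_gaussJump_le D l hτ t)
  rw [← hsum.tsum_eq, ThStar, ← mul_assoc, ← mul_assoc, ← tsum_mul_left]
  refine tsum_congr fun n => ?_
  simp only [gaussJump]
  rw [integral_const_mul, integral_complex_ofReal,
    integral_exp_neg_mul_sq_mul_crossing (gaussRate_pos hτ), sqrt_gaussRate, jumpCoeff,
    ← mul_assoc |lamVal m t l n|, mul_comm |lamVal m t l n|]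
  push_cast
  ring

lemma ae_forall_ne_lamVal (m : ℕ) (T : Finset (ℚ × ℚ)) (l : ℤ) :
    ∀ᵐ x : ℝ, ∀ t ∈ T, ∀ n : ℤ, x ≠ lamVal m t l n :=
  (Filter.eventually_all_finset T).2 fun _ _ => ae_all_iff.2 fun _ =>
    compl_mem_ae_iff.2 (measure_singleton _)

lemma gaussLineCoeff_ae_eq [NeZero m] (Φ : MeroJacobiForm k m S) {h : ℤ → ℂ → ℂ}
    (hh : IsCanonCoeff m Φ.toFun h) (hD : IsResidueFactor m S Φ.toFun D) (hT : IsRepSet S T)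
    (l : ℤ) (hτ : 0 < τ.im) : gaussLineCoeff m Φ.toFun l τ =ᵐ[volume] fun x =>
      ((Real.exp (-(gaussRate m τ) * x ^ 2) : ℝ) : ℂ) * h l τ -
        ∑ t ∈ T, ∑' n : ℤ, gaussJump m D l τ (t, n) x := by
  filter_upwards [ae_forall_ne_lamVal m T l] with x hx
  rw [gaussLineCoeff, lineCoeff_eq Φ hh hD hT l hτ hx, mul_sub, Finset.mul_sum]
  congr 1
  refine Finset.sum_congr rfl fun t _ => ?_
  rw [← tsum_mul_left]
  refine tsum_congr fun n => ?_
  rw [gaussJump, Complex.ofReal_mul, mul_left_comm]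

lemma integrable_gaussLineCoeff [NeZero m] (Φ : MeroJacobiForm k m S) {h : ℤ → ℂ → ℂ}
    (hh : IsCanonCoeff m Φ.toFun h) (hD : IsResidueFactor m S Φ.toFun D) (hT : IsRepSet S T)
    (l : ℤ) (hτ : 0 < τ.im) : Integrable (gaussLineCoeff m Φ.toFun l τ) :=
  (((integrable_exp_neg_mul_sq (gaussRate_pos hτ)).ofReal.mul_const _).sub
    (integrable_finsetSum _ fun t _ => integrable_tsum_gaussJump D l hτ t)).congr
    (gaussLineCoeff_ae_eq Φ hh hD hT l hτ).symm

lemma integral_gaussLineCoeff [NeZero m] (Φ : MeroJacobiForm k m S) {h : ℤ → ℂ → ℂ}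
    (hh : IsCanonCoeff m Φ.toFun h) (hD : IsResidueFactor m S Φ.toFun D) (hT : IsRepSet S T)
    (l : ℤ) (hτ : 0 < τ.im) : ∫ x, gaussLineCoeff m Φ.toFun l τ x =
      (√(Real.pi / gaussRate m τ) : ℂ) * hhat m h D T l τ := by
  have hgauss : Integrable fun x : ℝ => ((Real.exp (-(gaussRate m τ) * x ^ 2) : ℝ) : ℂ) * h l τ :=
    (integrable_exp_neg_mul_sq (gaussRate_pos hτ)).ofReal.mul_const _
  have hjump (t : ℚ × ℚ) := integrable_tsum_gaussJump (m := m) D l hτ t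
  rw [integral_congr_ae (gaussLineCoeff_ae_eq Φ hh hD hT l hτ),
    integral_sub hgauss (integrable_finsetSum _ fun t _ => hjump t),
    integral_finsetSum _ fun t _ => hjump t, integral_mul_const, integral_complex_ofReal,
    integral_gaussian, hhat, mul_sub, Finset.mul_sum]
  congr 1
  exact Finset.sum_congr rfl fun t _ => integral_tsum_gaussJump D l hτ t

end GaussianLineCoefficients

section PeterssonUnfolding

/-- The `n`-th term of the series `jTheta m l τ z`. -/
def jThetaTerm (m : ℕ) (l n : ℤ) (τ z : ℂ) : ℂ :=
  ee (((l : ℂ) + 2 * (m : ℂ) * (n : ℂ)) ^ 2 / (4 * (m : ℂ)) * τ +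
    ((l : ℂ) + 2 * (m : ℂ) * (n : ℂ)) * z)

/-- The density of the Petersson pairing of `φ(τ, ·)` with `jTheta m l τ` at `w = pτ + u`, where the
real coordinate `p` is `Im w / Im τ`. -/
def peterssonDensity (m : ℕ) (φ : ℂ → ℂ → ℂ) (l : ℤ) (τ w : ℂ) : ℂ :=
  φ τ w * (starRingEnd ℂ) (jTheta m l τ w) *
    (Real.exp (-(gaussRate m τ) * (w.im / τ.im) ^ 2) : ℂ)

/-- The Petersson pairing of `φ(τ, ·)` with `jTheta m l τ` over the torus `ℂ/(ℤτ + ℤ)`. -/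
def thetaPairing (m : ℕ) (φ : ℂ → ℂ → ℂ) (l : ℤ) (τ : ℂ) : ℂ :=
  ∫ p in (0 : ℝ)..1, ∫ u in (0 : ℝ)..1, peterssonDensity m φ l τ (p * τ + u)

variable {k : ℤ} {m : ℕ} {S : Set (ℚ × ℚ)} {T : Finset (ℚ × ℚ)} {τ : ℂ}

lemma ofReal_exp_neg_gaussRate_mul_sq (m : ℕ) (τ : ℂ) (x : ℝ) :
    ((Real.exp (-(gaussRate m τ) * x ^ 2) : ℝ) : ℂ) =
      ee (m * x ^ 2 * (τ - (starRingEnd ℂ) τ)) := by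
  rw [ee, Complex.sub_conj, Complex.ofReal_exp, gaussRate]
  congr 1
  push_cast
  linear_combination (-4 * (Real.pi : ℂ) * m * τ.im * x ^ 2) * Complex.I_sq

lemma peterssonDensity_mul_add (m : ℕ) (φ : ℂ → ℂ → ℂ) (l : ℤ) (hτ : 0 < τ.im) (p u : ℝ) :
    peterssonDensity m φ l τ (p * τ + u) = φ τ (p * τ + u) *
      (starRingEnd ℂ) (jTheta m l τ (p * τ + u)) * (Real.exp (-(gaussRate m τ) * p ^ 2) : ℂ) := by
  rw [peterssonDensity, Complex.add_im, Complex.im_ofReal_mul, Complex.ofReal_im, add_zero,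
    mul_div_cancel_right₀ _ hτ.ne']

lemma continuous_jThetaTerm (m : ℕ) (l n : ℤ) (τ : ℂ) : Continuous (jThetaTerm m l n τ) := by
  unfold jThetaTerm
  fun_prop

lemma norm_jThetaTerm_add_ofReal (m : ℕ) (l n : ℤ) (τ z : ℂ) (u : ℝ) :
    ‖jThetaTerm m l n τ (z + u)‖ = ‖jThetaTerm m l n τ z‖ := by
  have hunit : ‖ee (((l : ℂ) + 2 * m * n) * u)‖ = 1 := by
    rw [norm_ee,
      show ((l : ℂ) + 2 * m * n) * u = (((l + 2 * m * n) * u : ℝ) : ℂ) by push_cast; ring,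
      Complex.ofReal_im, mul_zero, neg_zero, Real.exp_zero]
  rw [jThetaTerm, mul_add (_ + _), ← add_assoc, ee_add, norm_mul, hunit, mul_one, jThetaTerm]

lemma hasSum_jThetaTerm [NeZero m] (l : ℤ) (hτ : 0 < τ.im) (z : ℂ) :
    HasSum (fun n : ℤ => jThetaTerm m l n τ z) (jTheta m l τ z) :=
  (summable_jTheta l hτ z).hasSum

lemma gaussian_mul_fourierIntegrand [NeZero m] {φ : ℂ → ℂ → ℂ} (he : EllipticLaw m φ) (l n : ℤ)
    (hτ : 0 < τ.im) (p u : ℝ) :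
    (Real.exp (-(gaussRate m τ) * (p + n + l / (2 * m)) ^ 2) : ℂ) *
        fourierIntegrand m φ l τ (u + ((p + n + l / (2 * m) : ℝ) : ℂ) * τ) =
      φ τ (p * τ + u) * (starRingEnd ℂ) (jThetaTerm m l n τ (p * τ + u)) *
        (Real.exp (-(gaussRate m τ) * p ^ 2) : ℂ) := by
  have hm := NeZero.ne (m : ℂ)
  have hshift : (u + ((p + n + l / (2 * m) : ℝ) : ℂ) * τ) - (l : ℂ) * τ / (2 * (m : ℂ)) =
      p * τ + u + (n : ℂ) * τ + ((0 : ℤ) : ℂ) := by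
    push_cast
    ring
  have hexp : ee (m * ((p + n + l / (2 * m) : ℝ) : ℂ) ^ 2 * (τ - (starRingEnd ℂ) τ)) *
      ee ((l : ℂ) ^ 2 * τ / (4 * m)) * ee (-(m : ℂ) * ((n : ℂ) ^ 2 * τ + 2 * n * (p * τ + u))) *
      ee (-(l : ℂ) * (u + ((p + n + l / (2 * m) : ℝ) : ℂ) * τ)) =
      (starRingEnd ℂ) (jThetaTerm m l n τ (p * τ + u)) *
        ee (m * p ^ 2 * (τ - (starRingEnd ℂ) τ)) := by
    rw [jThetaTerm, conj_ee]
    simp only [← ee_add]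
    congr 1
    simp only [map_add, map_mul, map_div₀, map_pow, Complex.conj_ofReal, map_intCast, map_natCast,
      map_ofNat]
    push_cast
    field_simp
    ring
  rw [ofReal_exp_neg_gaussRate_mul_sq, ofReal_exp_neg_gaussRate_mul_sq, fourierIntegrand, hshift,
    he τ hτ]
  linear_combination φ τ (p * τ + u) * hexp

lemma gaussLineCoeff_add_intCast_add [NeZero m] {φ : ℂ → ℂ → ℂ} (he : EllipticLaw m φ) (l n : ℤ)
    (hτ : 0 < τ.im) (p : ℝ) : gaussLineCoeff m φ l τ (p + n + l / (2 * m)) =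
      ∫ u in (0 : ℝ)..1, φ τ (p * τ + u) * (starRingEnd ℂ) (jThetaTerm m l n τ (p * τ + u)) *
        (Real.exp (-(gaussRate m τ) * p ^ 2) : ℂ) := by
  rw [gaussLineCoeff, lineCoeff, ← intervalIntegral.integral_const_mul]
  exact intervalIntegral.integral_congr fun u _ => gaussian_mul_fourierIntegrand he l n hτ p u

lemma continuous_horizontal (Φ : MeroJacobiForm k m S) (hT : IsRepSet S T) (hτ : 0 < τ.im) {p : ℝ}
    (hp : ∀ t ∈ T, ∀ n : ℤ, p ≠ lamVal m t 0 n) :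
    Continuous fun u : ℝ => Φ.toFun τ (p * τ + u) := by
  refine continuous_iff_continuousAt.2 fun u => ?_
  have hdiff := differentiableAt_fourierIntegrand Φ hT 0 hτ (w := p * τ + u) fun i hi him => by
    rw [im_fourierPole, Complex.add_im, Complex.im_ofReal_mul, Complex.ofReal_im, add_zero] at him
    exact absurd (mul_right_cancel₀ hτ.ne' him).symm (hp i.1 hi i.2)
  rw [fourierIntegrand_zero] at hdiff
  exact ContinuousAt.comp (g := Φ.toFun τ) (f := fun u : ℝ => (p : ℂ) * τ + u) hdiff.continuousAt
    (by fun_prop)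

lemma hasSum_gaussLineCoeff [NeZero m] (Φ : MeroJacobiForm k m S) (hT : IsRepSet S T) (l : ℤ)
    (hτ : 0 < τ.im) {p : ℝ} (hp : ∀ t ∈ T, ∀ n : ℤ, p ≠ lamVal m t 0 n) :
    HasSum (fun n : ℤ => gaussLineCoeff m Φ.toFun l τ (p + n + l / (2 * m)))
      (∫ u in (0 : ℝ)..1, peterssonDensity m Φ.toFun l τ (p * τ + u)) := by
  have hφ := continuous_horizontal Φ hT hτ hp
  obtain ⟨B, hB⟩ :=
    (isCompact_Icc (a := (0 : ℝ)) (b := 1)).exists_bound_of_continuousOn hφ.continuousOn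
  simp only [gaussLineCoeff_add_intCast_add Φ.elliptic l _ hτ p,
    peterssonDensity_mul_add m Φ.toFun l hτ p]
  refine intervalIntegral.hasSum_integral_of_dominated_convergence
    (fun n _ => B * ‖jThetaTerm m l n τ (p * τ)‖ * ‖(Real.exp (-(gaussRate m τ) * p ^ 2) : ℂ)‖)
    (fun n => ?_) (fun n => ae_of_all _ fun u hu => ?_) (ae_of_all _ fun u _ => ?_)
    intervalIntegrable_const (ae_of_all _ fun u _ => ?_)
  · have hterm : Continuous fun u : ℝ => jThetaTerm m l n τ (p * τ + u) :=
      (continuous_jThetaTerm m l n τ).comp (by fun_prop)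
    exact ((hφ.mul (Complex.continuous_conj.comp hterm)).mul continuous_const).aestronglyMeasurable
  · rw [Set.uIoc_of_le zero_le_one] at hu
    rw [norm_mul, norm_mul, RCLike.norm_conj, norm_jThetaTerm_add_ofReal]
    gcongr
    exact hB u (Set.Ioc_subset_Icc_self hu)
  · exact ((hasSum_jThetaTerm l hτ _).summable.norm.mul_left B).mul_right _
  · exact ((Complex.hasSum_conj'.2 (hasSum_jThetaTerm l hτ _)).mul_left _).mul_right _

lemma integral_eq_integral_of_hasSum_comp_add_intCast {E : Type*} [NormedAddCommGroup E]
    [NormedSpace ℝ E] [CompleteSpace E] {f g : ℝ → E} (hg : Integrable g) (d : ℝ)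
    (hf : ∀ᵐ p : ℝ, HasSum (fun n : ℤ => g (p + n + d)) (f p)) :
    ∫ p in (0 : ℝ)..1, f p = ∫ x, g x := by
  have hg' : Integrable fun x => g (x + d) := hg.comp_add_right d
  have hsum := hg'.hasSum_intervalIntegral_comp_add_int
  have hsum_norm := hg'.norm.hasSum_intervalIntegral_comp_add_int
  rw [integral_add_right_eq_self g d] at hsum
  simp only [intervalIntegral.integral_of_le zero_le_one] at hsum hsum_norm ⊢
  rw [hsum.unique (hasSum_integral_of_summable_integral_norm
    (fun n : ℤ => (hg'.comp_add_right (n : ℝ)).restrict) hsum_norm.summable)]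
  refine integral_congr_ae ?_
  filter_upwards [ae_restrict_of_ae hf] with p hp
  exact hp.tsum_eq.symm

lemma thetaPairing_eq [NeZero m] (Φ : MeroJacobiForm k m S) {h : ℤ → ℂ → ℂ}
    (hh : IsCanonCoeff m Φ.toFun h) {D : ℚ × ℚ → ℂ → ℂ} (hD : IsResidueFactor m S Φ.toFun D)
    (hT : IsRepSet S T) (l : ℤ) (hτ : 0 < τ.im) :
    thetaPairing m Φ.toFun l τ = (√(Real.pi / gaussRate m τ) : ℂ) * hhat m h D T l τ := by
  rw [← integral_gaussLineCoeff Φ hh hD hT l hτ]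
  refine integral_eq_integral_of_hasSum_comp_add_intCast
    (integrable_gaussLineCoeff Φ hh hD hT l hτ) (l / (2 * m)) ?_
  filter_upwards [ae_forall_ne_lamVal m T 0] with p hp
  exact hasSum_gaussLineCoeff Φ hT l hτ hp

end PeterssonUnfolding

section LocalIntegrability

lemma integrableAtFilter_nhds_of_isBigO_rpow {E F : Type*} [NormedAddCommGroup E]
    [NormedSpace ℝ E] [FiniteDimensional ℝ E] [MeasurableSpace E] [BorelSpace E]
    [NormedAddCommGroup F] {μ : Measure E} [μ.IsAddHaarMeasure] (hd : 1 ≤ Module.finrank ℝ E)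
    {f : E → F} {a : E} {α : ℝ} (hα : α < Module.finrank ℝ E)
    (hcont : ∀ᶠ x in 𝓝[≠] a, ContinuousAt f x)
    (hf : f =O[𝓝[≠] a] fun x => ‖x - a‖ ^ (-α)) : IntegrableAtFilter f (𝓝 a) μ := by
  have : Nontrivial E := Module.nontrivial_of_finrank_pos (R := ℝ) (zero_lt_one.trans_le hd)
  obtain ⟨C, hC, hbound⟩ := hf.exists_nonneg
  obtain ⟨r, hr, hball⟩ := Metric.eventually_nhds_iff_ball.1
    (eventually_nhdsWithin_iff.1 (hcont.and hbound.bound))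
  set g : E → F := (Metric.ball a r \ {a}).indicator f with hg
  have hmeas : MeasurableSet (Metric.ball a r \ {a}) :=
    measurableSet_ball.diff (measurableSet_singleton a)
  have hgmeas : AEStronglyMeasurable g μ :=
    (aestronglyMeasurable_indicator_iff hmeas).2 <| ContinuousOn.aestronglyMeasurable
      (fun x hx => ((hball x hx.1) hx.2).1.continuousWithinAt) hmeas
  have hgbound (x : E) : ‖g (x + a)‖ ≤ C * ‖x‖ ^ (-α) := by
    by_cases hx : x + a ∈ Metric.ball a r \ {a}
    · have := ((hball _ hx.1) hx.2).2
      rwa [add_sub_cancel_right, Real.norm_of_nonneg (by positivity),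
        ← Set.indicator_of_mem hx f] at this
    · rw [hg, Set.indicator_of_notMem hx, norm_zero]
      positivity
  have hgint : IntegrableOn (fun x => g (x + a)) (Metric.ball 0 r) μ :=
    integrableOn_ball_of_norm_le_rpow hd hα (ae_of_all _ hgbound)
      (hgmeas.comp_measurePreserving (measurePreserving_add_right μ a))
  have hpre : (· + a) ⁻¹' Metric.ball a r = Metric.ball (0 : E) r := by
    ext x
    simp only [Set.mem_preimage, mem_ball_iff_norm, add_sub_cancel_right, sub_zero]
  rw [← hpre] at hgint
  have hgint' : IntegrableOn g (Metric.ball a r) μ :=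
    ((measurePreserving_add_right μ a).integrableOn_comp_preimage
      (measurableEmbedding_addRight a)).1 hgint
  refine ⟨Metric.ball a r, Metric.ball_mem_nhds a hr, Integrable.congr hgint' ?_⟩
  filter_upwards [ae_restrict_mem measurableSet_ball, ae_restrict_of_ae (Measure.ae_ne μ a)]
    with x hx hxa
  exact Set.indicator_of_mem (s := Metric.ball a r \ {a}) ⟨hx, hxa⟩ f

lemma HasSimpleResidueAt.isBigO {f : ℂ → ℂ} {a r : ℂ} (hf : HasSimpleResidueAt f a r) :
    f =O[𝓝[≠] a] fun w => ‖w - a‖ ^ (-1 : ℝ) := by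
  have h := (Asymptotics.isBigO_refl (fun w : ℂ => (w - a)⁻¹) (𝓝[≠] a)).mul (hf.isBigO_one ℂ)
  have hfeq : (fun w => (w - a)⁻¹ * ((w - a) * f w)) =ᶠ[𝓝[≠] a] f := by
    filter_upwards [self_mem_nhdsWithin] with w hw
    exact inv_mul_cancel_left₀ (sub_ne_zero.2 hw) (f w)
  refine (h.congr' hfeq .rfl).norm_right.congr_right fun w => ?_
  rw [mul_one, norm_inv, Real.rpow_neg_one]

variable {k : ℤ} {m : ℕ} {S : Set (ℚ × ℚ)} {T : Finset (ℚ × ℚ)} {τ : ℂ}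

lemma eventually_continuousAt (Φ : MeroJacobiForm k m S) (hT : IsRepSet S T) (hτ : 0 < τ.im)
    (w₀ : ℂ) : ∀ᶠ w in 𝓝[≠] w₀, ContinuousAt (Φ.toFun τ) w := by
  obtain ⟨M, hM⟩ := exists_forall_notMem_Icc_le_abs_lamVal m T 0 (|w₀.im| / τ.im + 1)
  have hne : ∀ᶠ w in 𝓝[≠] w₀, ∀ i ∈ T ×ˢ Finset.Icc (-(M : ℤ)) M,
      ee (w - fourierPole m 0 τ i) ≠ 1 :=
    (Filter.eventually_all_finset _).2 fun i _ => eventually_ee_sub_ne_one _ _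
  have him : ∀ᶠ w in 𝓝[≠] w₀, |w.im| < (|w₀.im| / τ.im + 1) * τ.im := by
    have hlt : |w₀.im| < (|w₀.im| / τ.im + 1) * τ.im := by
      rw [add_mul, div_mul_cancel₀ _ hτ.ne']
      linarith
    exact ((isOpen_abs_im_lt _).eventually_mem hlt).filter_mono nhdsWithin_le_nhds
  filter_upwards [hne, him] with w hw hwim
  have hdiff := differentiableAt_fourierIntegrand Φ hT 0 hτ (w := w) fun i hi hiw => by
    by_cases hn : i.2 ∈ Finset.Icc (-(M : ℤ)) M
    · exact hw i (Finset.mem_product.2 ⟨hi, hn⟩)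
    · rw [← hiw, im_fourierPole, abs_mul, abs_of_pos hτ] at hwim
      exact absurd (lt_of_mul_lt_mul_right hwim hτ.le) (hM i.1 hi i.2 hn).not_gt
  rw [fourierIntegrand_zero] at hdiff
  exact hdiff.continuousAt

lemma exists_hasSimpleResidueAt [NeZero m] (Φ : MeroJacobiForm k m S) {D : ℚ × ℚ → ℂ → ℂ}
    (hD : IsResidueFactor m S Φ.toFun D) (hT : IsRepSet S T) (hτ : 0 < τ.im) (w₀ : ℂ) :
    ∃ r, HasSimpleResidueAt (Φ.toFun τ) w₀ r := by
  rw [← fourierIntegrand_zero m Φ.toFun τ]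
  by_cases hpole : ∃ i : (ℚ × ℚ) × ℤ, i.1 ∈ T ∧ ee (w₀ - fourierPole m 0 τ i) = 1
  · obtain ⟨i, hi, hiw⟩ := hpole
    exact ⟨_, (hasSimpleResidueAt_fourierIntegrand Φ.elliptic hD 0 hτ (hT.1 hi)).of_ee_sub_eq_one
      (periodic_fourierIntegrand Φ.elliptic 0 hτ) hiw⟩
  · push Not at hpole
    exact ⟨0, hasSimpleResidueAt_zero
      (differentiableAt_fourierIntegrand Φ hT 0 hτ fun i hi _ => hpole i hi).continuousAt⟩

lemma locallyIntegrable_peterssonDensity [NeZero m] (Φ : MeroJacobiForm k m S)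
    {D : ℚ × ℚ → ℂ → ℂ} (hD : IsResidueFactor m S Φ.toFun D) (hT : IsRepSet S T) (l : ℤ)
    (hτ : 0 < τ.im) (μ : Measure ℂ) [μ.IsAddHaarMeasure] :
    LocallyIntegrable (peterssonDensity m Φ.toFun l τ) μ := by
  intro w₀
  have hθ : Continuous (jTheta m l τ) := (differentiable_jTheta l hτ).continuous
  have hweight : Continuous fun w => (starRingEnd ℂ) (jTheta m l τ w) *
      (Real.exp (-(gaussRate m τ) * (w.im / τ.im) ^ 2) : ℂ) := by fun_prop
  have hdensity : peterssonDensity m Φ.toFun l τ = fun w => Φ.toFun τ w *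
      ((starRingEnd ℂ) (jTheta m l τ w) *
        (Real.exp (-(gaussRate m τ) * (w.im / τ.im) ^ 2) : ℂ)) :=
    funext fun w => mul_assoc _ _ _
  obtain ⟨r, hr⟩ := exists_hasSimpleResidueAt Φ hD hT hτ w₀
  have hO := hr.isBigO.mul
    (((hweight.tendsto w₀).mono_left nhdsWithin_le_nhds).isBigO_one ℝ)
  simp only [mul_one] at hO
  have hdim : Module.finrank ℝ ℂ = 2 := Complex.finrank_real_complex
  rw [hdensity]
  refine integrableAtFilter_nhds_of_isBigO_rpow (by rw [hdim]; norm_num)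
    (by rw [hdim]; norm_num) ?_ hO
  filter_upwards [eventually_continuousAt Φ hT hτ w₀] with w hw
  exact hw.mul hweight.continuousAt

/-- The real coordinates `w = qτ - p` on `ℂ`, in which `w/τ = p(-1/τ) + q`. -/
def torusCoord (τ : ℂ) : ℝ × ℝ →ₗ[ℝ] ℂ :=
  (LinearMap.snd ℝ ℝ ℝ).smulRight τ - (LinearMap.fst ℝ ℝ ℝ).smulRight 1

lemma torusCoord_apply (τ : ℂ) (x : ℝ × ℝ) : torusCoord τ x = x.2 * τ - x.1 := by
  simp [torusCoord]

lemma injective_torusCoord (hτ : 0 < τ.im) : Function.Injective (torusCoord τ) := by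
  refine (injective_iff_map_eq_zero _).2 fun x hx => ?_
  rw [torusCoord_apply] at hx
  have him := congrArg Complex.im hx
  rw [Complex.sub_im, Complex.im_ofReal_mul, Complex.ofReal_im, sub_zero, Complex.zero_im] at him
  have hx₂ : x.2 = 0 := (mul_eq_zero.1 him).resolve_right hτ.ne'
  rw [hx₂, Complex.ofReal_zero, zero_mul, zero_sub, neg_eq_zero] at hx
  exact Prod.ext (mod_cast hx) hx₂

lemma locallyIntegrable_peterssonDensity_torusCoord [NeZero m] (Φ : MeroJacobiForm k m S)
    {D : ℚ × ℚ → ℂ → ℂ} (hD : IsResidueFactor m S Φ.toFun D) (hT : IsRepSet S T) (l : ℤ)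
    (hτ : 0 < τ.im) :
    LocallyIntegrable fun x : ℝ × ℝ => peterssonDensity m Φ.toFun l τ (x.2 * τ - x.1) := by
  have hdim : Module.finrank ℝ (ℝ × ℝ) = Module.finrank ℝ ℂ := by
    rw [Module.finrank_prod, Module.finrank_self, Complex.finrank_real_complex]
  let L : (ℝ × ℝ) ≃L[ℝ] ℂ :=
    ((torusCoord τ).linearEquivOfInjective (injective_torusCoord hτ) hdim).toContinuousLinearEquiv
  have hcomp := (locallyIntegrable_map_homeomorph L.toHomeomorph).1
    (locallyIntegrable_peterssonDensity Φ hD hT l hτ ((volume : Measure (ℝ × ℝ)).map L))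
  refine hcomp.congr (ae_of_all _ fun x => ?_)
  exact congrArg _ (torusCoord_apply τ x)

lemma integrable_peterssonDensity_torusCoord [NeZero m] (Φ : MeroJacobiForm k m S)
    {D : ℚ × ℚ → ℂ → ℂ} (hD : IsResidueFactor m S Φ.toFun D) (hT : IsRepSet S T) (l : ℤ)
    (hτ : 0 < τ.im) :
    Integrable (fun x : ℝ × ℝ => peterssonDensity m Φ.toFun l τ (x.2 * τ - x.1))
      ((volume.restrict (Set.Ioc (0 : ℝ) 1)).prod (volume.restrict (Set.Ioc (0 : ℝ) 1))) := by
  rw [Measure.prod_restrict, ← Measure.volume_eq_prod]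
  exact ((locallyIntegrable_peterssonDensity_torusCoord Φ hD hT l hτ).integrableOn_isCompact
    (isCompact_Icc.prod isCompact_Icc)).mono_set
    (Set.prod_mono Set.Ioc_subset_Icc_self Set.Ioc_subset_Icc_self)

end LocalIntegrability

section TransformationLaws

variable {k : ℤ} {m : ℕ} {S : Set (ℚ × ℚ)} {T : Finset (ℚ × ℚ)} {τ : ℂ}

lemma peterssonDensity_add_one [NeZero m] {φ : ℂ → ℂ → ℂ} (he : EllipticLaw m φ) (l : ℤ)
    (hτ : 0 < τ.im) (w : ℂ) :
    peterssonDensity m φ l τ (w + 1) = peterssonDensity m φ l τ w := by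
  have hshift {ψ : ℂ → ℂ → ℂ} (hψ : EllipticLaw m ψ) : ψ τ (w + 1) = ψ τ w := by
    simpa [ee_zero] using hψ τ hτ w 0 1
  rw [peterssonDensity, peterssonDensity, hshift he, hshift (jTheta_ellipticLaw l), Complex.add_im,
    Complex.one_im, add_zero]

lemma gaussRate_add_one (m : ℕ) (τ : ℂ) : gaussRate m (τ + 1) = gaussRate m τ := by
  rw [gaussRate, gaussRate, Complex.add_im, Complex.one_im, add_zero]

lemma peterssonDensity_add_one_left [NeZero m] {φ : ℂ → ℂ → ℂ} (hφ : ModularLaw k m φ) (l : ℤ)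
    (hτ : 0 < τ.im) (w : ℂ) :
    peterssonDensity m φ l (τ + 1) w =
      ee (-((l : ℂ) ^ 2 / (4 * m))) * peterssonDensity m φ l τ w := by
  have hφT : φ (τ + 1) w = φ τ w := by
    simpa [ee_zero] using hφ τ hτ w 1 1 0 1 (by norm_num)
  have hθT := jTheta_add_intCast (m := m) l 1 τ w
  have hconj : (starRingEnd ℂ) (ee ((l : ℂ) ^ 2 / (4 * m))) = ee (-((l : ℂ) ^ 2 / (4 * m))) := by
    simp [conj_ee, Complex.conj_ofNat]
  rw [Int.cast_one, mul_one] at hθT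
  rw [peterssonDensity, peterssonDensity, hφT, hθT, map_mul, hconj, gaussRate_add_one,
    Complex.add_im, Complex.one_im, add_zero]
  ring

lemma integral_peterssonDensity_add [NeZero m] {φ : ℂ → ℂ → ℂ} (he : EllipticLaw m φ) (l : ℤ)
    (hτ : 0 < τ.im) (w : ℂ) (x : ℝ) :
    ∫ u in x..(x + 1), peterssonDensity m φ l τ (w + u) =
      ∫ u in (0 : ℝ)..1, peterssonDensity m φ l τ (w + u) := by
  have hper : Function.Periodic (fun u : ℝ => peterssonDensity m φ l τ (w + u)) 1 := fun u => by
    simp only [Complex.ofReal_add, Complex.ofReal_one, ← add_assoc,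
      peterssonDensity_add_one he l hτ]
  simpa only [zero_add] using hper.intervalIntegral_add_eq x 0

lemma thetaPairing_add_one [NeZero m] {φ : ℂ → ℂ → ℂ} (he : EllipticLaw m φ)
    (hφ : ModularLaw k m φ) (l : ℤ) (hτ : 0 < τ.im) :
    thetaPairing m φ l (τ + 1) = ee (-((l : ℂ) ^ 2 / (4 * m))) * thetaPairing m φ l τ := by
  rw [thetaPairing, thetaPairing, ← intervalIntegral.integral_const_mul]
  refine intervalIntegral.integral_congr fun p _ => ?_
  have hpoint (u : ℝ) : (p : ℂ) * (τ + 1) + u = p * τ + ((u + p : ℝ) : ℂ) := by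
    push_cast; ring
  simp only [peterssonDensity_add_one_left hφ l hτ, intervalIntegral.integral_const_mul, hpoint]
  rw [intervalIntegral.integral_comp_add_right
    (fun u : ℝ => peterssonDensity m φ l τ (p * τ + u)) p, zero_add, add_comm 1 p,
    integral_peterssonDensity_add he l hτ]

lemma ofReal_im_div_im (w τ : ℂ) :
    ((w.im / τ.im : ℝ) : ℂ) = (w - (starRingEnd ℂ) w) / (τ - (starRingEnd ℂ) τ) := by
  rw [Complex.sub_conj, Complex.sub_conj, mul_div_mul_right _ _ I_ne_zero, Complex.ofReal_mul,
    Complex.ofReal_mul, mul_div_mul_left _ _ (by norm_num), Complex.ofReal_div]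

lemma ofReal_exp_neg_gaussRate_mul_im_div_im_sq (m : ℕ) (τ w : ℂ) :
    (Real.exp (-(gaussRate m τ) * (w.im / τ.im) ^ 2) : ℂ) =
      ee (m * (w - (starRingEnd ℂ) w) ^ 2 / (τ - (starRingEnd ℂ) τ)) := by
  rw [ofReal_exp_neg_gaussRate_mul_sq, ofReal_im_div_im, div_pow, mul_div_assoc, mul_assoc]
  rcases eq_or_ne (τ - (starRingEnd ℂ) τ) 0 with h | _
  · rw [h]; simp
  · field_simp

-- `w ↦ m(w - w̄)²/(τ - τ̄)` and its transform under `(τ, w) ↦ (-1/τ, w/τ)` differ by `2i` times the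
-- imaginary part of `mw²/τ`, so the weight cancels the automorphy factors of `φ` and of `θ̄`.
lemma exp_neg_gaussRate_neg_inv (m : ℕ) (hτ : 0 < τ.im) (w : ℂ) :
    ee (m * w ^ 2 / τ) * (starRingEnd ℂ) (ee (m * w ^ 2 / τ)) *
      (Real.exp (-(gaussRate m (-1 / τ)) * ((w / τ).im / (-1 / τ).im) ^ 2) : ℂ) =
      (Real.exp (-(gaussRate m τ) * (w.im / τ.im) ^ 2) : ℂ) := by
  have hτ₀ : τ ≠ 0 := fun h => hτ.ne' (by rw [h, Complex.zero_im])
  have hconj : (starRingEnd ℂ) τ ≠ 0 := (map_ne_zero _).2 hτ₀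
  have hsub : τ - (starRingEnd ℂ) τ ≠ 0 := by
    rw [Complex.sub_conj]
    simp [hτ.ne']
  rw [ofReal_exp_neg_gaussRate_mul_im_div_im_sq, ofReal_exp_neg_gaussRate_mul_im_div_im_sq, conj_ee,
    ← ee_add, ← ee_add]
  congr 1
  simp only [map_mul, map_div₀, map_pow, map_neg, map_one, map_natCast]
  have hsub' : -1 / τ - -1 / (starRingEnd ℂ) τ =
      (τ - (starRingEnd ℂ) τ) / (τ * (starRingEnd ℂ) τ) := by
    field_simp
    ring
  rw [hsub']
  field_simp
  ring

lemma peterssonDensity_neg_inv [NeZero m] {φ : ℂ → ℂ → ℂ} (hφ : ModularLaw k m φ) (l : ℤ)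
    (hτ : 0 < τ.im) (w : ℂ) :
    peterssonDensity m φ l (-1 / τ) (w / τ) =
      τ ^ k * (starRingEnd ℂ) ((-I * (τ / (2 * m))) ^ (1 / 2 : ℂ)) *
        ∑ j ∈ Finset.range (2 * m), ee (j * l / (2 * m)) * peterssonDensity m φ j τ w := by
  have hφS : φ (-1 / τ) (w / τ) = τ ^ k * ee (m * w ^ 2 / τ) * φ τ w := by
    simpa using hφ τ hτ w 0 (-1) 1 0 (by norm_num)
  have hconj (j : ℕ) :
      (starRingEnd ℂ) (ee (-((j : ℂ) * l / (2 * m)))) = ee ((j : ℂ) * l / (2 * m)) := by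
    simp [conj_ee, Complex.conj_ofNat]
  rw [peterssonDensity, hφS, jTheta_neg_inv_eq_sum l hτ w, map_mul, map_mul, map_sum]
  simp only [peterssonDensity, ← exp_neg_gaussRate_neg_inv m hτ w, map_mul, hconj, Finset.mul_sum,
    Finset.sum_mul]
  exact Finset.sum_congr rfl fun j _ => by ring

lemma integral_peterssonDensity_torusCoord [NeZero m] (Φ : MeroJacobiForm k m S)
    {D : ℚ × ℚ → ℂ → ℂ} (hD : IsResidueFactor m S Φ.toFun D) (hT : IsRepSet S T) (l : ℤ)
    (hτ : 0 < τ.im) :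
    ∫ x : ℝ × ℝ, peterssonDensity m Φ.toFun l τ (x.2 * τ - x.1)
      ∂((volume.restrict (Set.Ioc (0 : ℝ) 1)).prod (volume.restrict (Set.Ioc (0 : ℝ) 1))) =
      thetaPairing m Φ.toFun l τ := by
  rw [integral_prod_symm _ (integrable_peterssonDensity_torusCoord Φ hD hT l hτ), thetaPairing,
    intervalIntegral.integral_of_le zero_le_one]
  refine integral_congr_ae (ae_of_all _ fun q => ?_)
  have hneg (p : ℝ) : (q : ℂ) * τ - p = q * τ + ((-p : ℝ) : ℂ) := by
    push_cast; ring
  simp only [hneg]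
  rw [← intervalIntegral.integral_of_le zero_le_one, intervalIntegral.integral_comp_neg
    (fun u : ℝ => peterssonDensity m Φ.toFun l τ (q * τ + u)), neg_zero]
  simpa only [neg_add_cancel] using integral_peterssonDensity_add Φ.elliptic l hτ (q * τ) (-1)

lemma thetaPairing_neg_inv [NeZero m] (Φ : MeroJacobiForm k m S) {D : ℚ × ℚ → ℂ → ℂ}
    (hD : IsResidueFactor m S Φ.toFun D) (hT : IsRepSet S T) (l : ℤ) (hτ : 0 < τ.im) :
    thetaPairing m Φ.toFun l (-1 / τ) =
      τ ^ k * (starRingEnd ℂ) ((-I * (τ / (2 * m))) ^ (1 / 2 : ℂ)) *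
        ∑ j ∈ Finset.range (2 * m), ee (j * l / (2 * m)) * thetaPairing m Φ.toFun j τ := by
  have hτ₀ : τ ≠ 0 := fun h => hτ.ne' (by rw [h, Complex.zero_im])
  have hdens (j : ℕ) := (integrable_peterssonDensity_torusCoord Φ hD hT j hτ).const_mul
    (ee ((j : ℂ) * l / (2 * m)))
  have hpoint (p q : ℝ) : (p : ℂ) * (-1 / τ) + q = (q * τ - p) / τ := by
    field_simp
    ring
  simp only [← integral_peterssonDensity_torusCoord Φ hD hT _ hτ, ← integral_const_mul]
  rw [← integral_finsetSum _ fun j _ => hdens j, ← integral_const_mul,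
    integral_prod _ ((integrable_finsetSum _ fun j _ => hdens j).const_mul _), thetaPairing]
  simp only [hpoint, peterssonDensity_neg_inv Φ.modular l hτ,
    intervalIntegral.integral_of_le zero_le_one]

lemma sqrt_pi_div_gaussRate_neg_inv (m : ℕ) (τ : ℂ) :
    √(Real.pi / gaussRate m (-1 / τ)) = ‖τ‖ * √(Real.pi / gaussRate m τ) := by
  have him : (-1 / τ).im = τ.im / ‖τ‖ ^ 2 := by
    rw [neg_div, one_div, Complex.neg_im, Complex.inv_im, Complex.normSq_eq_norm_sq, neg_div,
      neg_neg]
  have hratio : Real.pi / gaussRate m (-1 / τ) = ‖τ‖ ^ 2 * (Real.pi / gaussRate m τ) := by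
    rw [gaussRate, gaussRate, him, ← mul_div_assoc, div_div_eq_mul_div, mul_comm Real.pi,
      mul_div_assoc]
  rw [hratio, Real.sqrt_mul (by positivity), Real.sqrt_sq (norm_nonneg _)]

lemma ofReal_sqrt_pi_div_gaussRate_ne_zero [NeZero m] (hτ : 0 < τ.im) :
    (√(Real.pi / gaussRate m τ) : ℂ) ≠ 0 :=
  Complex.ofReal_ne_zero.2 (Real.sqrt_pos.2 (div_pos Real.pi_pos (gaussRate_pos hτ))).ne'

variable [NeZero m] (Φ : MeroJacobiForm k m S) {h : ℤ → ℂ → ℂ} (hh : IsCanonCoeff m Φ.toFun h)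
  {D : ℚ × ℚ → ℂ → ℂ} (hD : IsResidueFactor m S Φ.toFun D) (hT : IsRepSet S T)

include Φ hh hD hT

lemma hhat_add_two_mul_mul (l n : ℤ) (hτ : 0 < τ.im) :
    hhat m h D T (l + 2 * m * n) τ = hhat m h D T l τ := by
  apply mul_left_cancel₀ (ofReal_sqrt_pi_div_gaussRate_ne_zero (m := m) hτ)
  rw [← thetaPairing_eq Φ hh hD hT l hτ, ← thetaPairing_eq Φ hh hD hT _ hτ]
  simp only [thetaPairing, peterssonDensity, jTheta_add_two_mul]

lemma hhat_add_one (l : ℤ) (hτ : 0 < τ.im) :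
    hhat m h D T l (τ + 1) = ee (-((l : ℂ) ^ 2 / (4 * m))) * hhat m h D T l τ := by
  have hτ' : 0 < (τ + 1).im := by rwa [Complex.add_im, Complex.one_im, add_zero]
  have hpair := thetaPairing_add_one Φ.elliptic Φ.modular l hτ
  rw [thetaPairing_eq Φ hh hD hT l hτ, thetaPairing_eq Φ hh hD hT l hτ', gaussRate_add_one] at hpair
  apply mul_left_cancel₀ (ofReal_sqrt_pi_div_gaussRate_ne_zero (m := m) hτ)
  rw [hpair, mul_left_comm]

lemma norm_mul_hhat_neg_inv (l : ℤ) (hτ : 0 < τ.im) :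
    ‖τ‖ * hhat m h D T l (-1 / τ) =
      τ ^ k * (starRingEnd ℂ) ((-I * (τ / (2 * m))) ^ (1 / 2 : ℂ)) *
        ∑ j ∈ Finset.range (2 * m), ee (j * l / (2 * m)) * hhat m h D T j τ := by
  have hpair := thetaPairing_neg_inv Φ hD hT l hτ
  simp only [thetaPairing_eq Φ hh hD hT _ hτ, mul_left_comm (ee _), ← Finset.mul_sum] at hpair
  rw [thetaPairing_eq Φ hh hD hT l (im_neg_one_div_pos hτ), sqrt_pi_div_gaussRate_neg_inv,
    Complex.ofReal_mul] at hpair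
  apply mul_left_cancel₀ (ofReal_sqrt_pi_div_gaussRate_ne_zero (m := m) hτ)
  linear_combination hpair

end TransformationLaws

/-- Theorem (mock modularity, simple poles): the completed finite part `φ̂^F` of a
meromorphic Jacobi form with simple poles transforms like a Jacobi form of weight `k` and
index `m`, and each completed coefficient `ĥ_ℓ` transforms like a modular form of weight
`k - 1/2` on some principal congruence subgroup `Γ(N)`. -/
theorem completed_finite_part_is_modular (k : ℤ) (m : ℕ) (hm : 0 < m)
    (S : Set (ℚ × ℚ)) (Φ : MeroJacobiForm k m S) (hpoles : HasSimplePoles Φ)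
    (h : ℤ → ℂ → ℂ) (hh : IsCanonCoeff m Φ.toFun h)
    (D : ℚ × ℚ → ℂ → ℂ) (hD : IsResidueFactor m S Φ.toFun D)
    (T : Finset (ℚ × ℚ)) (hT : IsRepSet S T) :
    ModularLaw k m (completedFinitePart m h D T) ∧
    EllipticLaw m (completedFinitePart m h D T) ∧
    (∀ l : ℤ, ∃ N : ℕ, 0 < N ∧ ∀ τ : ℂ, 0 < τ.im → ∀ a b c d : ℤ, a * d - b * c = 1 →
      (N : ℤ) ∣ (a - 1) → (N : ℤ) ∣ b → (N : ℤ) ∣ c → (N : ℤ) ∣ (d - 1) →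
      hhat m h D T l (((a : ℂ) * τ + (b : ℂ)) / ((c : ℂ) * τ + (d : ℂ))) *
          stdTheta τ ^ (2 * k - 1) =
        hhat m h D T l τ *
          stdTheta (((a : ℂ) * τ + (b : ℂ)) / ((c : ℂ) * τ + (d : ℂ))) ^ (2 * k - 1)) := by
  have : NeZero m := ⟨hm.ne'⟩
  have hlaw : ModularLaw k m (finitePart m (hhat m h D T)) :=
    finitePart_modularLaw (fun l _ hτ => norm_mul_hhat_neg_inv Φ hh hD hT l hτ)
      fun l _ hτ => hhat_add_one Φ hh hD hT l hτ
  refine ⟨hlaw, finitePart_ellipticLaw,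
    fun l => ⟨4 * m, Nat.mul_pos four_pos hm, fun τ hτ a b c d hdet _ hb hc hd => ?_⟩⟩
  rw [Nat.cast_mul, Nat.cast_ofNat] at hb hc hd
  exact mul_stdTheta_zpow_of_level hdet hb hc hd hτ hlaw
    (fun l n _ hτ => hhat_add_two_mul_mul Φ hh hD hT l n hτ) l
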